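/- arXiv:1903.12353 — 3 statements merged into one kernel-verified Lean document; each statement's English description precedes it below -/
import Mathlib

section
/- For all s in N and t in N_0 there exists a constant D > 0 such that the following holds: for every m in N and every digital net P over F_2 with n x m generating matrices satisfying mu_1(P^perp) >= m - t + 1 (i.e., P is a digital (t, m, s)-net over F_2), int_{[0,1]^s} (L_2(P + delta))^2 d delta <= D m^{s-1} / 2^{2m}, where + denotes the digital shift. -/
open MeasureTheory Finset Matrix

noncomputable section

/-- The `i`-th `b`-adic digit of a natural number `k`. -/
def ndigit (b k i : ℕ) : ℕ := k / b ^ i % b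

/-- The truncated digit vector `ν_n(k) ∈ F_b^n`. -/
def digitVec (b n : ℕ) (k : ℕ) : Fin n → ZMod b := fun i => (ndigit b k i.val : ZMod b)

/-- The dual net of the digital net with generating matrices `C_1,...,C_s ∈ F_b^{n×m}`. -/
def dualNet {s n m : ℕ} (b : ℕ) (C : Fin s → Matrix (Fin n) (Fin m) (ZMod b)) :
    Set (Fin s → ℕ) :=
  {k | ∑ j, (C j)ᵀ.mulVec (digitVec b n (k j)) = 0}

/-- The list of positions (in decreasing order) of the nonzero `b`-adic digits of `k`;
position `i` corresponds to the digit of `b^i`, i.e. to the exponent `c - 1` in the paper. -/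
def nzPos (b k : ℕ) : List ℕ :=
  (((Finset.range k).filter fun i => ndigit b k i ≠ 0).sort (· ≤ ·)).reverse

/-- The Dick weight function `μ_α` (for `α = 1` the NRT weight). -/
def dickWeight (b α k : ℕ) : ℕ := (((nzPos b k).take α).map (· + 1)).sum

/-- The Dick weight of a vector of nonnegative integers. -/
def dickWeightV (b α : ℕ) {s : ℕ} (k : Fin s → ℕ) : ℕ := ∑ j, dickWeight b α (k j)

/-- `μ_α(P^⊥)`, the minimal Dick weight over nonzero elements of the dual net. -/
def minWeight {s n m : ℕ} (b α : ℕ) (C : Fin s → Matrix (Fin n) (Fin m) (ZMod b)) : ℕ :=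
  sInf (dickWeightV b α '' {k | k ∈ dualNet b C ∧ k ≠ 0})

/-- The list `κ_1 b^{c_1-1}, κ_2 b^{c_2-1}, ...` of nonzero terms of the `b`-adic
expansion of `k`, in decreasing order of the exponents. -/
def nzTerms (b k : ℕ) : List ℕ := (nzPos b k).map fun i => ndigit b k i * b ^ i

/-- `k^{(p)}`: the number `k` with its `p` most significant nonzero digits removed. -/
def trunc (b p k : ℕ) : ℕ := ((nzTerms b k).drop p).sum

/-- The term `κ_p b^{c_p-1}` (with the convention `κ_0 b^{c_0-1} = 0`). -/
def topTerm (b p k : ℕ) : ℕ := if p = 0 then 0 else (nzTerms b k).getD (p - 1) 0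

/-- `(k,l)` is of type `(p,q)`. -/
def IsType (b p q k l : ℕ) : Prop :=
  if k = l then p = 0 ∧ q = 0
  else trunc b p k = trunc b q l ∧ topTerm b p k ≠ topTerm b q l

/-- `(k,l) ∈ T_{≥ α}`: `(k,l)` is of type `(p,q)` for some `p + q ≥ α`. -/
def TGe (b α k l : ℕ) : Prop := ∃ p q : ℕ, α ≤ p + q ∧ IsType b p q k l

/-- `(k,l) ∈ T_{≥ α}` for vectors: some coordinate pair lies in `T_{≥ α}`. -/
def TGeV (b α : ℕ) {s : ℕ} (k l : Fin s → ℕ) : Prop := ∃ j, TGe b α (k j) (l j)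

/-- The `(i+1)`-st `b`-adic digit `ξ_{i+1}` of `x ∈ [0,1]` (for `x ≠ 1` the unique expansion
with infinitely many digits different from `b-1`; for `x = 1` all digits equal `b-1`). -/
def rdigit (b : ℕ) (x : ℝ) (i : ℕ) : ℕ :=
  if x = 1 then b - 1 else (⌊x * (b : ℝ) ^ (i + 1)⌋).toNat % b

/-- The `k`-th `b`-adic Walsh function. -/
def walsh (b k : ℕ) (x : ℝ) : ℂ :=
  Complex.exp (2 * (Real.pi : ℂ) * Complex.I *
    ((∑ i ∈ Finset.range k, ndigit b k i * rdigit b x i : ℕ) : ℂ) / (b : ℂ))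

/-- The multivariate `b`-adic Walsh function. -/
def walshV (b : ℕ) {s : ℕ} (k : Fin s → ℕ) (x : Fin s → ℝ) : ℂ := ∏ j, walsh b (k j) (x j)

/-- The unit cube `[0,1]^s`. -/
def cube (s : ℕ) : Set (Fin s → ℝ) := Set.univ.pi fun _ => Set.Icc 0 1

/-- The `(k,l)`-th Walsh coefficient of a kernel `K : [0,1]^s × [0,1]^s → ℝ`. -/
def walshCoeff (b : ℕ) {s : ℕ} (K : (Fin s → ℝ) → (Fin s → ℝ) → ℝ) (k l : Fin s → ℕ) : ℂ :=
  ∫ x in cube s, ∫ y in cube s,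
    (K x y : ℂ) * (starRingEnd ℂ) (walshV b k x) * walshV b l y

/-- The `b`-adic digital shift `x ⊕ y` of reals `x, y ∈ [0,1]`. -/
def dshift (b : ℕ) (x y : ℝ) : ℝ :=
  ∑' i : ℕ, (((rdigit b x i + rdigit b y i) % b : ℕ) : ℝ) / (b : ℝ) ^ (i + 1)

/-- Componentwise digital shift of vectors in `[0,1]^s`. -/
def dshiftV (b : ℕ) {s : ℕ} (x y : Fin s → ℝ) : Fin s → ℝ := fun j => dshift b (x j) (y j)

/-- The `h`-th point of the digital net with generating matrices `C_1,...,C_s ∈ F_b^{n×m}`. -/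
def netPoint {s n m : ℕ} (b : ℕ) (C : Fin s → Matrix (Fin n) (Fin m) (ZMod b)) (h : ℕ) :
    Fin s → ℝ :=
  fun j => ∑ i : Fin n, (((C j).mulVec (digitVec b m h) i).val : ℝ) / (b : ℝ) ^ (i.val + 1)

open Classical in
/-- The squared `L_2`-discrepancy of the point multiset `pts 0, ..., pts (N-1)` in `[0,1]^s`. -/
def sqL2 {s : ℕ} (N : ℕ) (pts : ℕ → (Fin s → ℝ)) : ℝ :=
  ∫ y in cube s,
    ((∑ h ∈ Finset.range N, if ∀ j, 0 ≤ pts h j ∧ pts h j < y j then (1 : ℝ) else 0) / N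
      - ∏ j, y j) ^ 2

/-- The Bernoulli polynomial `B_r` evaluated at a real `x`. -/
def bpoly (r : ℕ) (x : ℝ) : ℝ := Polynomial.aeval x (Polynomial.bernoulli r)

/-- The one-dimensional reproducing kernel `K_α` of the Sobolev space of smoothness `α`. -/
def sobKer1 (α : ℕ) (x y : ℝ) : ℝ :=
  ∑ r ∈ Finset.range (α + 1), bpoly r x * bpoly r y / ((r.factorial : ℝ)) ^ 2
    + (-1 : ℝ) ^ (α + 1) * bpoly (2 * α) |x - y| / ((2 * α).factorial : ℝ)

/-- The `s`-fold product kernel `K_{α,s}`. -/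
def sobKer (α : ℕ) {s : ℕ} (x y : Fin s → ℝ) : ℝ := ∏ j, sobKer1 α (x j) (y j)

/-- The constant `C_{τ,b}`. -/
def Ctau (b τ : ℕ) : ℝ :=
  if τ ≤ 1 then 1 / (2 * Real.sin (Real.pi / b))
  else (1 + 1 / (b : ℝ) + 1 / ((b : ℝ) * ((b : ℝ) + 1))) ^ (τ - 2)
      / (2 * Real.sin (Real.pi / b)) ^ τ

end

noncomputable section

lemma rdigit_lt (x : ℝ) (i : ℕ) : rdigit 2 x i < 2 := by
  unfold rdigit; split_ifs <;> omega

lemma dterm_summable (f : ℕ → ℕ) :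
    Summable (fun i : ℕ => ((f i % 2 : ℕ) : ℝ) / (2 : ℝ) ^ (i + 1)) := by
  refine Summable.of_nonneg_of_le (fun i => by positivity) (fun i => ?_)
    (summable_geometric_two)
  have h1 : ((f i % 2 : ℕ) : ℝ) ≤ 1 := by exact_mod_cast (by omega : f i % 2 ≤ 1)
  rw [pow_succ, div_le_iff₀ (by positivity), one_div, inv_pow]
  have : ((2 : ℝ) ^ i)⁻¹ * (2 ^ i * 2) = 2 := by field_simp
  rw [this]; linarith

lemma dshift_eq (x y : ℝ) : dshift 2 x y =
    ∑' i : ℕ, (((rdigit 2 x i + rdigit 2 y i) % 2 : ℕ) : ℝ) / (2 : ℝ) ^ (i + 1) := by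
  unfold dshift; norm_num

lemma dshift_nonneg (x y : ℝ) : 0 ≤ dshift 2 x y := by
  rw [dshift_eq]; exact tsum_nonneg fun i => by positivity

lemma dshift_le_one (x y : ℝ) : dshift 2 x y ≤ 1 := by
  rw [dshift_eq]
  have h : ∀ i : ℕ, (((rdigit 2 x i + rdigit 2 y i) % 2 : ℕ) : ℝ) / (2 : ℝ) ^ (i + 1)
      ≤ (1 / 2 : ℝ) / 2 ^ i := by
    intro i
    have h1 : (((rdigit 2 x i + rdigit 2 y i) % 2 : ℕ) : ℝ) ≤ 1 := by
      exact_mod_cast (by omega : (rdigit 2 x i + rdigit 2 y i) % 2 ≤ 1)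
    rw [div_div, ← pow_succ']
    gcongr
  have h2 : HasSum (fun i : ℕ => (1 / 2 : ℝ) / 2 ^ i) 1 := by
    simpa using hasSum_geometric_two' (1 : ℝ)
  rw [← h2.tsum_eq]
  exact (dterm_summable _).tsum_le_tsum h h2.summable

lemma rdigit_half_zero (d : ℕ) (hd : d < 2) (x : ℝ) (h0 : 0 ≤ x) (h1 : x < 1) :
    rdigit 2 ((d + x) / 2) 0 = d := by
  have hd1 : (d : ℝ) ≤ 1 := by exact_mod_cast (by omega : d ≤ 1)
  unfold rdigit
  rw [if_neg (by intro h; linarith)]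
  have : ((d : ℝ) + x) / 2 * ((2 : ℕ) : ℝ) ^ (0 + 1) = x + (d : ℕ) := by push_cast; ring
  rw [this, Int.floor_add_natCast, Int.floor_eq_zero_iff.2 ⟨h0, h1⟩]
  simp; omega

lemma rdigit_half_succ (d : ℕ) (hd : d < 2) (x : ℝ) (h0 : 0 ≤ x) (h1 : x < 1) (i : ℕ) :
    rdigit 2 ((d + x) / 2) (i + 1) = rdigit 2 x i := by
  have hd1 : (d : ℝ) ≤ 1 := by exact_mod_cast (by omega : d ≤ 1)
  unfold rdigit
  rw [if_neg (by intro h; linarith), if_neg (by intro h; linarith)]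
  have : ((d : ℝ) + x) / 2 * ((2 : ℕ) : ℝ) ^ (i + 1 + 1)
      = x * ((2 : ℕ) : ℝ) ^ (i + 1) + ((2 * (d * 2 ^ i) : ℕ) : ℝ) := by push_cast; ring
  rw [this, Int.floor_add_natCast, Int.toNat_add (Int.floor_nonneg.2 (by positivity)) (by positivity)]
  rw [Int.toNat_natCast]
  omega

lemma dshift_half (e d : ℕ) (he : e < 2) (hd : d < 2) (x y : ℝ) (hx0 : 0 ≤ x) (hx1 : x < 1)
    (hy0 : 0 ≤ y) (hy1 : y < 1) :
    dshift 2 ((e + x) / 2) ((d + y) / 2) = (((e + d) % 2 : ℕ) + dshift 2 x y) / 2 := by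
  rw [dshift_eq, (dterm_summable _).tsum_eq_zero_add, rdigit_half_zero e he x hx0 hx1,
    rdigit_half_zero d hd y hy0 hy1, dshift_eq x y, add_div (((e + d) % 2 : ℕ) : ℝ)]
  congr 1
  · simp
  · rw [← tsum_div_const]
    congr 1; ext i
    rw [rdigit_half_succ e he x hx0 hx1, rdigit_half_succ d hd y hy0 hy1, div_div, ← pow_succ]

lemma dshift_zero (y : ℝ) (hy0 : 0 ≤ y) (hy1 : y < 1) : dshift 2 0 y = y := by
  rw [dshift_eq]
  conv_rhs => rw [← Real.ofDigits_digits (b := 2) (by norm_num) ⟨hy0, hy1⟩]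
  unfold Real.ofDigits
  congr 1; ext i
  unfold Real.ofDigitsTerm Real.digits
  have h : rdigit 2 0 i = 0 := by unfold rdigit; simp
  rw [h, zero_add, div_eq_mul_inv]
  congr 2
  unfold rdigit
  rw [if_neg (by linarith)]
  simp only [Int.floor_toNat, Fin.ofNat, Nat.mod_mod]

/-- finite binary expansion -/
def pt (n : ℕ) (c : ℕ → ZMod 2) : ℝ := ∑ i ∈ Finset.range n, ((c i).val : ℝ) / 2 ^ (i + 1)

lemma pt_succ (n : ℕ) (c : ℕ → ZMod 2) :
    pt (n + 1) c = ((c 0).val + pt n (fun i => c (i + 1))) / 2 := by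
  unfold pt
  rw [Finset.sum_range_succ', add_div, add_comm, Finset.sum_div]
  congr 1
  · simp
  · refine Finset.sum_congr rfl fun i _ => ?_
    rw [div_div, ← pow_succ]

lemma pt_nonneg (n : ℕ) (c : ℕ → ZMod 2) : 0 ≤ pt n c := by
  unfold pt; positivity

lemma pt_lt_one (n : ℕ) : ∀ (c : ℕ → ZMod 2), pt n c < 1 := by
  induction n with
  | zero => intro c; simp [pt]
  | succ n ih =>
    intro c
    have h := ih (fun i => c (i + 1))
    have h1 : ((c 0).val : ℝ) ≤ 1 := by
      have := ZMod.val_lt (c 0)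
      exact_mod_cast (by omega : (c 0).val ≤ 1)
    rw [pt_succ]; linarith

lemma T_half (n : ℕ) (c : ℕ → ZMod 2) (d : ℕ) (hd : d < 2) (y : ℝ) (hy0 : 0 ≤ y) (hy1 : y < 1) :
    dshift 2 (pt (n + 1) c) ((d + y) / 2) =
      ((((c 0).val + d) % 2 : ℕ) + dshift 2 (pt n (fun i => c (i + 1))) y) / 2 := by
  rw [pt_succ]
  exact dshift_half _ _ (ZMod.val_lt (c 0)) hd _ _ (pt_nonneg _ _) (pt_lt_one _ _) hy0 hy1

/-- integrable on `[0,1]` with given integral -/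
def HasI (g : ℝ → ℝ) (a : ℝ) : Prop :=
  IntervalIntegrable g volume 0 1 ∧ ∫ x in (0:ℝ)..1, g x = a

lemma HasI.half {g u v : ℝ → ℝ} {a b : ℝ} (hu : HasI u a) (hv : HasI v b)
    (h0 : ∀ y, 0 ≤ y → y < 1 → g (((0 : ℕ) + y) / 2) = u y)
    (h1 : ∀ y, 0 ≤ y → y < 1 → g (((1 : ℕ) + y) / 2) = v y) : HasI g ((a + b) / 2) := by
  have e0 : Set.EqOn (fun x => u (2 * x)) g (Set.uIoo 0 (1 / 2)) := by
    intro x hx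
    rw [Set.uIoo_of_le (by norm_num)] at hx
    have := h0 (2 * x) (by linarith [hx.1]) (by linarith [hx.2])
    simp only [← this]; congr 1; push_cast; ring
  have e1 : Set.EqOn (fun x => v (2 * x + (-1))) g (Set.uIoo (1 / 2) 1) := by
    intro x hx
    rw [Set.uIoo_of_le (by norm_num)] at hx
    have := h1 (2 * x + (-1)) (by linarith [hx.1]) (by linarith [hx.2])
    simp only [← this]; congr 1; push_cast; ring
  have i0 : IntervalIntegrable g volume 0 (1 / 2) := by
    have := hu.1.comp_mul_left (c := 2)
    rw [zero_div] at this
    exact this.congr_uIoo e0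
  have i1 : IntervalIntegrable g volume (1 / 2) 1 := by
    have := (hv.1.comp_add_right (-1)).comp_mul_left (c := 2)
    norm_num at this
    refine IntervalIntegrable.congr_uIoo ?_ e1
    norm_num
    exact this
  refine ⟨i0.trans i1, ?_⟩
  rw [← intervalIntegral.integral_add_adjacent_intervals i0 i1,
    ← intervalIntegral.integral_congr_uIoo e0, ← intervalIntegral.integral_congr_uIoo e1,
    intervalIntegral.integral_comp_mul_left _ (by norm_num),
    intervalIntegral.integral_comp_mul_add _ (by norm_num)]
  norm_num
  rw [hu.2, hv.2]; ring

lemma HasI.congr {f g : ℝ → ℝ} {a : ℝ} (hf : HasI f a) (h : ∀ y, 0 ≤ y → y < 1 → f y = g y) :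
    HasI g a := by
  have e : Set.EqOn f g (Set.uIoo 0 1) := by
    intro x hx
    rw [Set.uIoo_of_le (by norm_num)] at hx
    exact h x hx.1.le hx.2
  exact ⟨hf.1.congr_uIoo e, by rw [← hf.2, intervalIntegral.integral_congr_uIoo e]⟩

lemma HasI.lin {f : ℝ → ℝ} {a : ℝ} (hf : HasI f a) (p q : ℝ) :
    HasI (fun x => p + q * f x) (p + q * a) := by
  refine ⟨intervalIntegrable_const.add (hf.1.const_mul q), ?_⟩
  rw [intervalIntegral.integral_add intervalIntegrable_const (hf.1.const_mul q),
    intervalIntegral.integral_const_mul, hf.2]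
  simp

lemma HasI.add {f g : ℝ → ℝ} {a b : ℝ} (hf : HasI f a) (hg : HasI g b) :
    HasI (fun x => f x + g x) (a + b) :=
  ⟨hf.1.add hg.1, by rw [intervalIntegral.integral_add hf.1 hg.1, hf.2, hg.2]⟩

lemma val_cases (a : ZMod 2) : a.val = 0 ∨ a.val = 1 := by
  have := ZMod.val_lt a; omega

lemma hasI_T (n : ℕ) : ∀ c : ℕ → ZMod 2, HasI (fun y => dshift 2 (pt n c) y) (1 / 2) := by
  induction n with
  | zero =>
    intro c
    refine HasI.congr (f := fun y => y) ⟨?_, ?_⟩ ?_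
    · exact continuous_id.intervalIntegrable _ _
    · simp
    · intro y h0 h1; simp [pt, dshift_zero y h0 h1]
  | succ n ih =>
    intro c
    have h := ih (fun i => c (i + 1))
    have e : (1 / 2 : ℝ) = ((0 + (1 / 2) * (1 / 2)) + (1 / 2 + (1 / 2) * (1 / 2))) / 2 := by norm_num
    have e' : (1 / 2 : ℝ) = ((1 / 2 + (1 / 2) * (1 / 2)) + (0 + (1 / 2) * (1 / 2))) / 2 := by norm_num
    rcases val_cases (c 0) with hc | hc
    · rw [e]
      refine HasI.half (h.lin 0 (1 / 2)) (h.lin (1 / 2) (1 / 2)) ?_ ?_ <;>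
      · intro y h0 h1
        rw [T_half n c _ (by norm_num) y h0 h1, hc]; norm_num; ring
    · rw [e']
      refine HasI.half (h.lin (1 / 2) (1 / 2)) (h.lin 0 (1 / 2)) ?_ ?_ <;>
      · intro y h0 h1
        rw [T_half n c _ (by norm_num) y h0 h1, hc]; norm_num; ring

lemma hasI_Tsq (n : ℕ) : ∀ c : ℕ → ZMod 2, HasI (fun y => dshift 2 (pt n c) y ^ 2) (1 / 3) := by
  induction n with
  | zero =>
    intro c
    refine HasI.congr (f := fun y => y ^ 2) ⟨?_, ?_⟩ ?_
    · exact (continuous_pow 2).intervalIntegrable _ _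
    · rw [integral_pow]; norm_num
    · intro y h0 h1; simp [pt, dshift_zero y h0 h1]
  | succ n ih =>
    intro c
    have h := ih (fun i => c (i + 1))
    have h' := hasI_T n (fun i => c (i + 1))
    have k0 := h.lin 0 (1 / 4)
    have k1 := (h.lin (1 / 4) (1 / 4)).add (h'.lin 0 (1 / 2))
    rcases val_cases (c 0) with hc | hc
    · have := HasI.half (g := fun y => dshift 2 (pt (n + 1) c) y ^ 2) k0 k1 ?_ ?_
      · convert this using 1; norm_num
      all_goals
        intro y h0 h1
        rw [T_half n c _ (by norm_num) y h0 h1, hc]; norm_num; ring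
    · have := HasI.half (g := fun y => dshift 2 (pt (n + 1) c) y ^ 2) k1 k0 ?_ ?_
      · convert this using 1; norm_num
      all_goals
        intro y h0 h1
        rw [T_half n c _ (by norm_num) y h0 h1, hc]; norm_num; ring

open Classical in
/-- indicator of agreement of the first `i` digits -/
def agree (c c' : ℕ → ZMod 2) (i : ℕ) : ℝ := if ∀ r < i, c r = c' r then 1 else 0

lemma agree_zero (c c' : ℕ → ZMod 2) : agree c c' 0 = 1 := by simp [agree]

lemma agree_nonneg (c c' : ℕ → ZMod 2) (i : ℕ) : 0 ≤ agree c c' i := by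
  unfold agree; split_ifs <;> norm_num

lemma agree_succ_eq (c c' : ℕ → ZMod 2) (h : c 0 = c' 0) (i : ℕ) :
    agree c c' (i + 1) = agree (fun i => c (i + 1)) (fun i => c' (i + 1)) i := by
  unfold agree
  congr 1
  apply propext
  constructor
  · intro h r hr; exact h (r + 1) (by omega)
  · intro h' r hr
    cases r with
    | zero => exact h
    | succ r => exact h' r (by omega)

/-- weights -/
def wt (L i : ℕ) : ℝ := if i < L then (1 / 2) ^ (i + 2) else (1 / 2) ^ (i + 1)

lemma wt_nonneg (L i : ℕ) : 0 ≤ wt L i := by unfold wt; split_ifs <;> positivity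

lemma wt_succ (L i : ℕ) : wt (L + 1) (i + 1) = wt L i / 2 := by
  unfold wt
  simp only [Nat.add_lt_add_iff_right]
  split_ifs <;> rw [pow_succ] <;> ring

lemma max_half (a b : ℝ) : max (a / 2) (b / 2) = max a b / 2 := by
  rw [max_div_div_right (by norm_num)]

lemma hasI_max (n : ℕ) : ∀ c c' : ℕ → ZMod 2, (∀ r, n ≤ r → c r = c' r) →
    ∃ a, HasI (fun y => 1 - max (dshift 2 (pt n c) y) (dshift 2 (pt n c') y)) a ∧
      ∀ L, a ≤ ∑ i ∈ Finset.range (L + 1), wt L i * agree c c' i := by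
  induction n with
  | zero =>
    intro c c' hcc
    refine ⟨1 / 2, ?_, ?_⟩
    · have := (hasI_T 0 c).lin 1 (-1)
      have e : (1 / 2 : ℝ) = 1 + (-1) * (1 / 2) := by norm_num
      rw [e]
      refine this.congr ?_
      intro y h0 h1
      simp [pt]; ring
    · intro L
      have hcc' : c = c' := funext fun r => hcc r (by omega)
      subst hcc'
      have : ∀ L, ∑ i ∈ Finset.range (L + 1), wt L i * agree c c i = 1 / 2 := by
        intro L
        induction L with
        | zero => simp [wt, agree]
        | succ L ih =>
          rw [Finset.sum_range_succ']
          simp only [wt_succ]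
          simp only [agree] at ih ⊢
          simp at ih ⊢
          rw [← Finset.sum_div, ih]; norm_num [wt]
      rw [this]
  | succ n ih =>
    intro c c' hcc
    by_cases h : c 0 = c' 0
    · obtain ⟨a, ha, hb⟩ := ih (fun i => c (i + 1)) (fun i => c' (i + 1))
        (fun r hr => hcc _ (by omega))
      have k0 := ha.lin (1 / 2) (1 / 2)
      have k1 := ha.lin 0 (1 / 2)
      refine ⟨1 / 4 + a / 2, ?_, ?_⟩
      · have e0 : ∀ x y : ℝ, 1 - max (x / 2) (y / 2) = 1 / 2 + 1 / 2 * (1 - max x y) := by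
          intro x y; rw [max_half]; ring
        have e1 : ∀ x y : ℝ, 1 - max ((1 + x) / 2) ((1 + y) / 2) = 0 + 1 / 2 * (1 - max x y) := by
          intro x y; rw [max_half, max_add_add_left]; ring
        rcases val_cases (c 0) with hc | hc
        · have hc' : (c' 0).val = 0 := h ▸ hc
          have := HasI.half (g := fun y => 1 - max (dshift 2 (pt (n + 1) c) y)
            (dshift 2 (pt (n + 1) c') y)) k0 k1 ?_ ?_
          · convert this using 1; ring
          · intro y h0 h1
            rw [T_half n c _ (by norm_num) y h0 h1, T_half n c' _ (by norm_num) y h0 h1, hc, hc',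
              ← e0]; norm_num
          · intro y h0 h1
            rw [T_half n c _ (by norm_num) y h0 h1, T_half n c' _ (by norm_num) y h0 h1, hc, hc',
              ← e1]; norm_num
        · have hc' : (c' 0).val = 1 := h ▸ hc
          have := HasI.half (g := fun y => 1 - max (dshift 2 (pt (n + 1) c) y)
            (dshift 2 (pt (n + 1) c') y)) k1 k0 ?_ ?_
          · convert this using 1; ring
          · intro y h0 h1
            rw [T_half n c _ (by norm_num) y h0 h1, T_half n c' _ (by norm_num) y h0 h1, hc, hc',
              ← e1]; norm_num
          · intro y h0 h1
            rw [T_half n c _ (by norm_num) y h0 h1, T_half n c' _ (by norm_num) y h0 h1, hc, hc',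
              ← e0]; norm_num
      · intro L
        cases L with
        | zero =>
          have := hb 0
          simp [wt, agree] at this ⊢
          linarith
        | succ L =>
          have := hb L
          rw [Finset.sum_range_succ']
          simp only [wt_succ, agree_succ_eq c c' h, agree_zero]
          have e : ∀ i, wt L i / 2 * agree (fun i => c (i + 1)) (fun i => c' (i + 1)) i =
            (wt L i * agree (fun i => c (i + 1)) (fun i => c' (i + 1)) i) / 2 := by intro i; ring
          simp only [e]
          rw [← Finset.sum_div]
          have : wt (L + 1) 0 = 1 / 4 := by simp [wt]; norm_num
          linarith
    · refine ⟨1 / 4, ?_, ?_⟩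
      · have t0 := (hasI_T n (fun i => c (i + 1))).lin (1 / 2) (-1 / 2)
        have t1 := (hasI_T n (fun i => c' (i + 1))).lin (1 / 2) (-1 / 2)
        have e0 : ∀ x y : ℝ, 0 ≤ x → y ≤ 1 → 1 - max ((1 + x) / 2) (y / 2) = 1 / 2 + -1 / 2 * x := by
          intro x y hx hy; rw [max_eq_left (by linarith)]; ring
        have e1 : ∀ x y : ℝ, 0 ≤ x → y ≤ 1 → 1 - max (y / 2) ((1 + x) / 2) = 1 / 2 + -1 / 2 * x := by
          intro x y hx hy; rw [max_eq_right (by linarith)]; ring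
        rcases val_cases (c 0) with hc | hc
        · have hc' : (c' 0).val = 1 := by
            rcases val_cases (c' 0) with h' | h'
            · exact absurd (ZMod.val_injective 2 (hc.trans h'.symm)) h
            · exact h'
          have := HasI.half (g := fun y => 1 - max (dshift 2 (pt (n + 1) c) y)
            (dshift 2 (pt (n + 1) c') y)) t1 t0 ?_ ?_
          · convert this using 1; norm_num
          · intro y h0 h1
            rw [T_half n c _ (by norm_num) y h0 h1, T_half n c' _ (by norm_num) y h0 h1, hc, hc',
              ← e1 _ _ (dshift_nonneg _ _) (dshift_le_one (pt n (fun i => c (i + 1))) y)]; norm_num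
          · intro y h0 h1
            rw [T_half n c _ (by norm_num) y h0 h1, T_half n c' _ (by norm_num) y h0 h1, hc, hc',
              ← e0 _ _ (dshift_nonneg _ _) (dshift_le_one (pt n (fun i => c' (i + 1))) y)]; norm_num
        · have hc' : (c' 0).val = 0 := by
            rcases val_cases (c' 0) with h' | h'
            · exact h'
            · exact absurd (ZMod.val_injective 2 (hc.trans h'.symm)) h
          have := HasI.half (g := fun y => 1 - max (dshift 2 (pt (n + 1) c) y)
            (dshift 2 (pt (n + 1) c') y)) t0 t1 ?_ ?_
          · convert this using 1; norm_num
          · intro y h0 h1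
            rw [T_half n c _ (by norm_num) y h0 h1, T_half n c' _ (by norm_num) y h0 h1, hc, hc',
              ← e0 _ _ (dshift_nonneg _ _) (dshift_le_one (pt n (fun i => c' (i + 1))) y)]; norm_num
          · intro y h0 h1
            rw [T_half n c _ (by norm_num) y h0 h1, T_half n c' _ (by norm_num) y h0 h1, hc, hc',
              ← e1 _ _ (dshift_nonneg _ _) (dshift_le_one (pt n (fun i => c (i + 1))) y)]; norm_num
      · intro L
        have h1 : wt L 0 * agree c c' 0 ≤ ∑ i ∈ Finset.range (L + 1), wt L i * agree c c' i :=
          Finset.single_le_sum (f := fun i => wt L i * agree c c' i)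
            (fun i _ => mul_nonneg (wt_nonneg L i) (agree_nonneg c c' i)) (by simp)
        refine le_trans ?_ h1
        rw [agree_zero]
        unfold wt; split_ifs <;> norm_num

/-! ### Warnock-type formula -/

lemma cube_measure (s : ℕ) : (volume : Measure (Fin s → ℝ)).restrict (cube s) =
    Measure.pi (fun _ => (volume : Measure ℝ).restrict (Set.Icc 0 1)) := by
  unfold cube
  rw [volume_pi, Measure.restrict_pi_pi]

lemma HasI.int {g : ℝ → ℝ} {a : ℝ} (h : HasI g a) :
    Integrable g ((volume : Measure ℝ).restrict (Set.Icc 0 1)) := by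
  have := (intervalIntegrable_iff_integrableOn_Icc_of_le (by norm_num)).1 h.1
  exact this

lemma HasI.val {g : ℝ → ℝ} {a : ℝ} (h : HasI g a) : ∫ x in Set.Icc (0:ℝ) 1, g x = a := by
  rw [integral_Icc_eq_integral_Ioc, ← intervalIntegral.integral_of_le (by norm_num)]
  exact h.2

/-- integrable on the cube with given integral -/
def HasC (s : ℕ) (g : (Fin s → ℝ) → ℝ) (a : ℝ) : Prop :=
  IntegrableOn g (cube s) ∧ ∫ x in cube s, g x = a

lemma HasC.prod {s : ℕ} {g : Fin s → ℝ → ℝ} {a : Fin s → ℝ} (h : ∀ j, HasI (g j) (a j)) :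
    HasC s (fun x => ∏ j, g j (x j)) (∏ j, a j) := by
  unfold HasC IntegrableOn
  rw [cube_measure]
  refine ⟨Integrable.fintype_prod fun j => (h j).int, ?_⟩
  rw [integral_fintype_prod_eq_prod]
  exact Finset.prod_congr rfl fun j _ => (h j).val

lemma HasC.sum {s : ℕ} {ι : Type*} (S : Finset ι) {g : ι → (Fin s → ℝ) → ℝ} {a : ι → ℝ}
    (h : ∀ j, HasC s (g j) (a j)) : HasC s (fun x => ∑ j ∈ S, g j x) (∑ j ∈ S, a j) := by
  refine ⟨integrable_finsetSum S fun j _ => (h j).1, ?_⟩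
  rw [integral_finsetSum S fun j _ => (h j).1]
  exact Finset.sum_congr rfl fun j _ => (h j).2

lemma HasC.mul {s : ℕ} {g : (Fin s → ℝ) → ℝ} {a : ℝ} (h : HasC s g a) (c : ℝ) :
    HasC s (fun x => c * g x) (c * a) := by
  refine ⟨h.1.const_mul c, ?_⟩
  rw [integral_const_mul, h.2]

lemma HasC.add {s : ℕ} {f g : (Fin s → ℝ) → ℝ} {a b : ℝ} (hf : HasC s f a) (hg : HasC s g b) :
    HasC s (fun x => f x + g x) (a + b) := by
  refine ⟨hf.1.add hg.1, ?_⟩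
  rw [integral_add hf.1 hg.1, hf.2, hg.2]

lemma HasI.indicator_mul (p : ℝ) (hp0 : 0 ≤ p) (hp1 : p ≤ 1) (f : ℝ → ℝ) (hf : Continuous f) :
    HasI (fun y => if p < y then f y else 0) (∫ x in p..1, f x) := by
  have e0 : Set.EqOn (fun _ => (0 : ℝ)) (fun y => if p < y then f y else 0) (Set.uIoo 0 p) := by
    intro x hx
    rw [Set.uIoo_of_le hp0] at hx
    simp [hx.2.le]
  have e1 : Set.EqOn f (fun y => if p < y then f y else 0) (Set.uIoo p 1) := by
    intro x hx
    rw [Set.uIoo_of_le hp1] at hx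
    simp [hx.1]
  have i0 := (intervalIntegrable_const (μ := volume) (a := 0) (b := p) (c := (0 : ℝ))).congr_uIoo e0
  have i1 := (hf.intervalIntegrable (μ := volume) p 1).congr_uIoo e1
  refine ⟨i0.trans i1, ?_⟩
  rw [← intervalIntegral.integral_add_adjacent_intervals i0 i1,
    ← intervalIntegral.integral_congr_uIoo e0, ← intervalIntegral.integral_congr_uIoo e1]
  simp

lemma warnock {s : ℕ} (N : ℕ) (p : ℕ → Fin s → ℝ) (h0 : ∀ h j, 0 ≤ p h j) (h1 : ∀ h j, p h j ≤ 1) :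
    sqL2 N p = (∑ h ∈ Finset.range N, ∑ h' ∈ Finset.range N,
        ((1 / (N : ℝ)) ^ 2 * ∏ j, (1 - max (p h j) (p h' j))))
      + ((∑ h ∈ Finset.range N, (-2 / (N : ℝ)) * ∏ j, ((1 - p h j ^ 2) / 2)) + (1 / 3) ^ s) := by
  classical
  have A : HasC s (fun y => ∑ h ∈ Finset.range N, ∑ h' ∈ Finset.range N,
        ((1 / (N : ℝ)) ^ 2 * ∏ j, (if max (p h j) (p h' j) < y j then (1 : ℝ) else 0)))
      (∑ h ∈ Finset.range N, ∑ h' ∈ Finset.range N,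
        ((1 / (N : ℝ)) ^ 2 * ∏ j, (1 - max (p h j) (p h' j)))) := by
    refine HasC.sum _ fun h => HasC.sum _ fun h' => HasC.mul (HasC.prod
      (g := fun j y => if max (p h j) (p h' j) < y then (1 : ℝ) else 0) fun j => ?_) _
    have := HasI.indicator_mul (max (p h j) (p h' j)) (le_max_of_le_left (h0 h j))
      (max_le (h1 h j) (h1 h' j)) (fun _ => 1) continuous_const
    simpa using this
  have B : HasC s (fun y => ∑ h ∈ Finset.range N,
        ((-2 / (N : ℝ)) * ∏ j, (if p h j < y j then y j else 0)))
      (∑ h ∈ Finset.range N, (-2 / (N : ℝ)) * ∏ j, ((1 - p h j ^ 2) / 2)) := by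
    refine HasC.sum _ fun h => HasC.mul (HasC.prod
      (g := fun j y => if p h j < y then y else 0) fun j => ?_) _
    have := HasI.indicator_mul (p h j) (h0 h j) (h1 h j) (fun y => y) continuous_id
    simpa using this
  have C : HasC s (fun y => ∏ j, y j ^ 2) ((1 / 3) ^ s) := by
    have : HasC s (fun y => ∏ j, y j ^ 2) (∏ _j : Fin s, (1 / 3)) := by
      refine HasC.prod (g := fun _ y => y ^ 2) fun j => ⟨(continuous_pow 2).intervalIntegrable _ _, ?_⟩
      rw [integral_pow]; norm_num
    simpa using this
  rw [← (A.add (B.add C)).2]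
  unfold sqL2
  congr 1
  ext y
  have hind : ∀ h, (if ∀ j, 0 ≤ p h j ∧ p h j < y j then (1 : ℝ) else 0)
      = ∏ j, (if p h j < y j then (1 : ℝ) else 0) := by
    intro h
    rw [Finset.prod_ite_zero]
    simp [h0]
  have e1 : ∀ h h', (∏ j, (if max (p h j) (p h' j) < y j then (1 : ℝ) else 0)) =
      (∏ j, (if p h j < y j then (1 : ℝ) else 0)) * ∏ j, (if p h' j < y j then (1 : ℝ) else 0) := by
    intro h h'
    rw [← Finset.prod_mul_distrib]
    refine Finset.prod_congr rfl fun j _ => ?_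
    simp only [max_lt_iff]
    split_ifs <;> simp_all
  have e2 : ∀ h, (∏ j, (if p h j < y j then y j else 0)) =
      (∏ j, (if p h j < y j then (1 : ℝ) else 0)) * ∏ j, y j := by
    intro h
    rw [← Finset.prod_mul_distrib]
    refine Finset.prod_congr rfl fun j _ => ?_
    split_ifs <;> simp
  simp only [hind, e1, e2, Finset.prod_pow]
  generalize ∏ j, y j = Y
  generalize hF : (fun h => ∏ j, (if p h j < y j then (1 : ℝ) else 0)) = F
  have hF' : ∀ h, ∏ j, (if p h j < y j then (1 : ℝ) else 0) = F h := fun h => by rw [← hF]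
  simp only [hF']
  rw [← Finset.mul_sum, ← Finset.sum_mul]
  simp only [← Finset.mul_sum]
  rw [← Finset.sum_mul]
  ring

lemma mean_formula {s n : ℕ} (N : ℕ) (hN : 0 < N) (c : ℕ → Fin s → ℕ → ZMod 2)
    (hc : ∀ h h' j, ∀ r, n ≤ r → c h j r = c h' j r) (L : ℕ) :
    (∫ δ in cube s, sqL2 N (fun h => dshiftV 2 (fun j => pt n (c h j)) δ)) ≤
      (∑ h ∈ Finset.range N, ∑ h' ∈ Finset.range N,
        ((1 / (N : ℝ)) ^ 2 * ∏ j, ∑ i ∈ Finset.range (L + 1), wt L i * agree (c h j) (c h' j) i))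
      - (1 / 3) ^ s := by
  choose a ha hb using fun h h' j => hasI_max n (c h j) (c h' j) (hc h h' j)
  have A : HasC s (fun δ => ∑ h ∈ Finset.range N, ∑ h' ∈ Finset.range N,
        ((1 / (N : ℝ)) ^ 2 * ∏ j, (1 - max (dshift 2 (pt n (c h j)) (δ j))
          (dshift 2 (pt n (c h' j)) (δ j)))))
      (∑ h ∈ Finset.range N, ∑ h' ∈ Finset.range N,
        ((1 / (N : ℝ)) ^ 2 * ∏ j, a h h' j)) := by
    refine HasC.sum _ fun h => HasC.sum _ fun h' => HasC.mul (HasC.prod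
      (g := fun j y => 1 - max (dshift 2 (pt n (c h j)) y) (dshift 2 (pt n (c h' j)) y))
      fun j => ?_) _
    exact ha h h' j
  have B : HasC s (fun δ => ∑ h ∈ Finset.range N,
        ((-2 / (N : ℝ)) * ∏ j, ((1 - dshift 2 (pt n (c h j)) (δ j) ^ 2) / 2)))
      (∑ h ∈ Finset.range N, (-2 / (N : ℝ)) * ∏ j : Fin s, (1 / 3)) := by
    refine HasC.sum _ fun h => HasC.mul (HasC.prod
      (g := fun j y => (1 - dshift 2 (pt n (c h j)) y ^ 2) / 2) fun j => ?_) _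
    have := (hasI_Tsq n (c h j)).lin (1 / 2) (-1 / 2)
    have e : (1 / 3 : ℝ) = 1 / 2 + -1 / 2 * (1 / 3) := by norm_num
    rw [e]
    refine this.congr fun y _ _ => ?_
    ring
  have C : HasC s (fun _ => (1 / 3 : ℝ) ^ s) ((1 / 3) ^ s) := by
    have : HasC s (fun _ => ∏ _j : Fin s, (1 / 3 : ℝ)) (∏ _j : Fin s, (1 / 3 : ℝ)) := by
      refine HasC.prod (g := fun _ _ => 1 / 3) fun j => ⟨intervalIntegrable_const, by simp⟩
    simpa using this
  have key : ∀ δ : Fin s → ℝ, sqL2 N (fun h => dshiftV 2 (fun j => pt n (c h j)) δ) = _ :=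
    fun δ => warnock N (fun h => dshiftV 2 (fun j => pt n (c h j)) δ)
      (fun h j => dshift_nonneg _ _) (fun h j => dshift_le_one _ _)
  simp only [key, dshiftV]
  rw [(A.add (B.add C)).2]
  have hN' : (N : ℝ) ≠ 0 := by positivity
  have : (∑ h ∈ Finset.range N, (-2 / (N : ℝ)) * ∏ j : Fin s, (1 / 3 : ℝ)) = -2 * (1 / 3) ^ s := by
    simp; field_simp
  rw [this]
  have hle : (∑ h ∈ Finset.range N, ∑ h' ∈ Finset.range N,
        ((1 / (N : ℝ)) ^ 2 * ∏ j, a h h' j)) ≤ (∑ h ∈ Finset.range N, ∑ h' ∈ Finset.range N,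
        ((1 / (N : ℝ)) ^ 2 * ∏ j, ∑ i ∈ Finset.range (L + 1), wt L i * agree (c h j) (c h' j) i)) := by
    refine Finset.sum_le_sum fun h _ => Finset.sum_le_sum fun h' _ => ?_
    refine mul_le_mul_of_nonneg_left ?_ (by positivity)
    refine Finset.prod_le_prod (fun j _ => ?_) (fun j _ => hb h h' j L)
    rw [← (ha h h' j).2]
    refine intervalIntegral.integral_nonneg (by norm_num) fun y _ => ?_
    have := max_le (dshift_le_one (pt n (c h j)) y) (dshift_le_one (pt n (c h' j)) y)
    linarith
  linarith

/-! ### Linear algebra -/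

/-- extension of a finite vector by zero -/
def extv {n : ℕ} (v : Fin n → ZMod 2) : ℕ → ZMod 2 := fun r => if h : r < n then v ⟨r, h⟩ else 0

/-- rows of the generating matrices extended by zero -/
def rowv {s n m : ℕ} (C : Fin s → Matrix (Fin n) (Fin m) (ZMod 2)) (j : Fin s) (r : ℕ) :
    Fin m → ZMod 2 := if h : r < n then C j ⟨r, h⟩ else 0

lemma extv_mulVec {s n m : ℕ} (C : Fin s → Matrix (Fin n) (Fin m) (ZMod 2)) (j : Fin s) (r : ℕ)
    (η : Fin m → ZMod 2) : extv ((C j).mulVec η) r = rowv C j r ⬝ᵥ η := by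
  unfold extv rowv
  split_ifs
  · rfl
  · simp

lemma netPoint_eq {s n m : ℕ} (C : Fin s → Matrix (Fin n) (Fin m) (ZMod 2)) (h : ℕ) :
    netPoint 2 C h = fun j => pt n (extv ((C j).mulVec (digitVec 2 m h))) := by
  ext j
  unfold netPoint pt
  rw [Finset.sum_range]
  refine Finset.sum_congr rfl fun i _ => ?_
  simp [extv]

lemma dickWeight_le (k a : ℕ) (h : k < 2 ^ a) : dickWeight 2 1 k ≤ a := by
  unfold dickWeight
  cases hl : nzPos 2 k with
  | nil => simp
  | cons x l =>
    have hx : x ∈ nzPos 2 k := by rw [hl]; simp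
    simp only [nzPos, List.mem_reverse, Finset.mem_sort, Finset.mem_filter] at hx
    unfold ndigit at hx
    simp only [List.take_succ_cons, List.take_zero, List.map_cons, List.map_nil, List.sum_cons,
      List.sum_nil, add_zero]
    by_contra hcon
    have h2 : 2 ^ a ≤ 2 ^ x := Nat.pow_le_pow_right (by norm_num) (by omega)
    have : k / 2 ^ x = 0 := Nat.div_eq_of_lt (by omega)
    rw [this] at hx
    simp at hx

lemma ndigit_eq (k i : ℕ) : ndigit 2 k i = (k.testBit i).toNat := by
  unfold ndigit
  rw [Nat.toNat_testBit]

lemma rows_indep {s n m t : ℕ} (C : Fin s → Matrix (Fin n) (Fin m) (ZMod 2))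
    (hC : (m : ℤ) - t + 1 ≤ minWeight 2 1 C) (i : Fin s → ℕ) (hi : ∑ j, i j ≤ m - t)
    (v : ((j : Fin s) × Fin (i j)) → ZMod 2)
    (hv : v ᵥ* (Matrix.of fun p : ((j : Fin s) × Fin (i j)) => rowv C p.1 p.2) = 0) : v = 0 := by
  classical
  let k : Fin s → ℕ := fun j => Nat.ofBits (fun r : Fin (i j) => decide (v ⟨j, r⟩ ≠ 0))
  have hklt : ∀ j, k j < 2 ^ i j := fun j => Nat.ofBits_lt_two_pow _
  have hdig : ∀ j (r : ℕ) (h : r < i j), (ndigit 2 (k j) r : ZMod 2) = v ⟨j, ⟨r, h⟩⟩ := by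
    intro j r h
    rw [ndigit_eq, Nat.testBit_ofBits_lt _ _ h]
    generalize v ⟨j, ⟨r, h⟩⟩ = a
    revert a; decide
  have hdig0 : ∀ j (r : ℕ) (h : ¬ r < i j), (ndigit 2 (k j) r : ZMod 2) = 0 := by
    intro j r h
    have : k j < 2 ^ r := (hklt j).trans_le (Nat.pow_le_pow_right (by norm_num) (by omega))
    rw [ndigit_eq, Nat.testBit_lt_two_pow this]; simp
  have hk0 : k = 0 → v = 0 := by
    intro h
    ext ⟨j, r⟩
    rw [← hdig j r r.2, h]
    simp [ndigit]
  by_contra hne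
  have hkne : k ≠ 0 := fun h => hne (hk0 h)
  have hmem : k ∈ dualNet 2 C := by
    show ∑ j, (C j)ᵀ.mulVec (digitVec 2 n (k j)) = 0
    rw [← hv]
    ext x
    simp only [Matrix.vecMul, dotProduct, Finset.sum_apply, Matrix.mulVec, Matrix.transpose_apply,
      Matrix.of_apply, digitVec]
    rw [Fintype.sum_sigma]
    refine Finset.sum_congr rfl fun j _ => ?_
    have h1 : ∑ r : Fin n, C j r x * (ndigit 2 (k j) r : ZMod 2) =
        ∑ r ∈ Finset.range (n + i j), rowv C j r x * (ndigit 2 (k j) r : ZMod 2) := by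
      rw [← Finset.sum_subset (s₁ := Finset.range n)]
      · rw [Finset.sum_range]
        refine Finset.sum_congr rfl fun r _ => ?_
        simp [rowv]
      · intro r; simp; omega
      · intro r _ hr
        simp at hr
        rw [rowv, dif_neg (by omega)]; simp
    have h2 : ∑ r : Fin (i j), v ⟨j, r⟩ * rowv C j r x =
        ∑ r ∈ Finset.range (n + i j), rowv C j r x * (ndigit 2 (k j) r : ZMod 2) := by
      rw [← Finset.sum_subset (s₁ := Finset.range (i j))]
      · rw [Finset.sum_range]
        refine Finset.sum_congr rfl fun r _ => ?_
        rw [hdig j r r.2, mul_comm]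
      · intro r; simp; omega
      · intro r _ hr
        simp only [Finset.mem_range] at hr
        rw [hdig0 j r hr, mul_zero]
    rw [h1, h2]
  have hle : minWeight 2 1 C ≤ dickWeightV 2 1 k := Nat.sInf_le ⟨k, ⟨hmem, hkne⟩, rfl⟩
  have hle2 : dickWeightV 2 1 k ≤ ∑ j, i j :=
    Finset.sum_le_sum fun j _ => dickWeight_le _ _ (hklt j)
  by_cases htm : t ≤ m
  · omega
  · have hs : ∑ j, i j = 0 := by omega
    apply hkne
    ext j
    have : i j = 0 := by
      have := Finset.sum_eq_zero_iff.1 hs j (Finset.mem_univ _)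
      exact this
    have h := hklt j
    rw [this] at h
    simpa using h

open Classical in
/-- kernel count -/
def Qc {s n m : ℕ} (C : Fin s → Matrix (Fin n) (Fin m) (ZMod 2)) (i : Fin s → ℕ) : ℕ :=
  (Finset.univ.filter fun η : Fin m → ZMod 2 => ∀ j, ∀ r < i j, rowv C j r ⬝ᵥ η = 0).card

lemma Qc_eq {s n m t : ℕ} (C : Fin s → Matrix (Fin n) (Fin m) (ZMod 2))
    (hC : (m : ℤ) - t + 1 ≤ minWeight 2 1 C) (i : Fin s → ℕ) (hi : ∑ j, i j ≤ m - t) :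
    Qc C i * 2 ^ (∑ j, i j) = 2 ^ m := by
  classical
  set R : Matrix ((j : Fin s) × Fin (i j)) (Fin m) (ZMod 2) :=
    Matrix.of fun p : ((j : Fin s) × Fin (i j)) => rowv C p.1 p.2 with hR
  have hinj : Function.Injective (fun v => v ᵥ* R) := by
    intro v w hvw
    have : (v - w) ᵥ* R = 0 := by
      rw [Matrix.sub_vecMul]; exact sub_eq_zero.2 hvw
    exact sub_eq_zero.1 (rows_indep C hC i hi _ this)
  have hli := Matrix.vecMul_injective_iff.1 hinj
  have hrank : R.rank = Fintype.card ((j : Fin s) × Fin (i j)) := hli.rank_matrix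
  have hcard : Fintype.card ((j : Fin s) × Fin (i j)) = ∑ j, i j := by simp
  have hrn := LinearMap.finrank_range_add_finrank_ker R.mulVecLin
  have hrn' : R.rank + Module.finrank (ZMod 2) (LinearMap.ker R.mulVecLin) = m := by
    rw [Matrix.rank]; simpa using hrn
  have hk : Qc C i = Fintype.card (LinearMap.ker R.mulVecLin) := by
    unfold Qc
    rw [Fintype.card_subtype]
    congr 1
    ext η
    simp only [Finset.mem_filter, Finset.mem_univ, true_and, LinearMap.mem_ker,
      Matrix.mulVecLin_apply]
    constructor
    · intro h
      ext ⟨j, r⟩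
      exact h j r r.2
    · intro h j r hr
      exact congrFun h ⟨j, ⟨r, hr⟩⟩
  rw [hk, Module.card_eq_pow_finrank (K := ZMod 2), ZMod.card, ← pow_add]
  congr 1
  omega

lemma exists_le_sum (s M : ℕ) : ∀ (d : ℕ) (f : Fin s → ℕ), ∑ j, f j = M + d →
    ∃ g : Fin s → ℕ, (∀ j, g j ≤ f j) ∧ ∑ j, g j = M := by
  intro d
  induction d with
  | zero => intro f hf; exact ⟨f, fun _ => le_rfl, hf⟩
  | succ d ih =>
    intro f hf
    have : ∃ j, 0 < f j := by
      by_contra hcon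
      push Not at hcon
      have : ∑ j, f j = 0 := Finset.sum_eq_zero fun j _ => by have := hcon j; omega
      omega
    obtain ⟨j, hj⟩ := this
    have h1 : f j + ∑ x ∈ Finset.univ.erase j, f x = ∑ x, f x :=
      Finset.add_sum_erase Finset.univ f (Finset.mem_univ j)
    have h2 : ∑ l, (Function.update f j (f j - 1)) l = M + d := by
      rw [← Finset.add_sum_erase Finset.univ _ (Finset.mem_univ j)]
      rw [Finset.sum_congr (g := fun x => f x) rfl]
      · rw [Function.update_self]; omega
      · intro l hl
        simp [Function.update_of_ne (Finset.ne_of_mem_erase hl)]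
    obtain ⟨g, hg, hg'⟩ := ih _ h2
    refine ⟨g, fun l => (hg l).trans ?_, hg'⟩
    by_cases hl : l = j
    · subst hl; simp
    · simp [Function.update_of_ne hl]

lemma Qc_le {s n m t : ℕ} (C : Fin s → Matrix (Fin n) (Fin m) (ZMod 2))
    (hC : (m : ℤ) - t + 1 ≤ minWeight 2 1 C) (i : Fin s → ℕ) (hi : m - t ≤ ∑ j, i j) :
    Qc C i * 2 ^ (m - t) ≤ 2 ^ m := by
  obtain ⟨g, hg, hg'⟩ := exists_le_sum s (m - t) (∑ j, i j - (m - t)) i (by omega)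
  rw [← Qc_eq C hC g hg'.le, hg']
  refine Nat.mul_le_mul_right _ ?_
  unfold Qc
  refine Finset.card_le_card fun η => ?_
  simp only [Finset.mem_filter, Finset.mem_univ, true_and]
  exact fun h j r hr => h j r (hr.trans_le (hg j))

lemma digitVec_bij (m : ℕ) :
    Function.Bijective (fun h : Fin (2 ^ m) => digitVec 2 m (h : ℕ)) := by
  rw [Fintype.bijective_iff_injective_and_card]
  constructor
  · intro a b hab
    ext
    refine Nat.eq_of_testBit_eq fun i => ?_
    by_cases hi : i < m
    · have := congrFun hab ⟨i, hi⟩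
      simp only [digitVec, ndigit_eq] at this
      revert this
      generalize (a : ℕ).testBit i = x
      generalize (b : ℕ).testBit i = y
      revert x y; decide
    · have hp : 2 ^ m ≤ 2 ^ i := Nat.pow_le_pow_right (by norm_num) (by omega)
      rw [Nat.testBit_lt_two_pow (a.2.trans_le hp), Nat.testBit_lt_two_pow (b.2.trans_le hp)]
  · simp

lemma sum_digitVec (m : ℕ) (F : (Fin m → ZMod 2) → ℝ) :
    ∑ h ∈ Finset.range (2 ^ m), F (digitVec 2 m h) = ∑ η, F η := by
  rw [Finset.sum_range]
  exact (digitVec_bij m).sum_comp F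

lemma pair_sum {s n m : ℕ} (C : Fin s → Matrix (Fin n) (Fin m) (ZMod 2)) (i : Fin s → ℕ) :
    ∑ h ∈ Finset.range (2 ^ m), ∑ h' ∈ Finset.range (2 ^ m),
      ∏ j, agree (extv ((C j).mulVec (digitVec 2 m h))) (extv ((C j).mulVec (digitVec 2 m h'))) (i j)
      = 2 ^ m * (Qc C i : ℝ) := by
  classical
  have e : ∀ η η' : Fin m → ZMod 2,
      ∏ j, agree (extv ((C j).mulVec η)) (extv ((C j).mulVec η')) (i j) =
      if ∀ j, ∀ r < i j, rowv C j r ⬝ᵥ (η' - η) = 0 then (1 : ℝ) else 0 := by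
    intro η η'
    unfold agree
    rw [Finset.prod_ite_zero]
    simp only [extv_mulVec, dotProduct_sub, sub_eq_zero, Finset.prod_const_one, Finset.mem_univ,
      true_imp_iff]
    congr 1
    apply propext
    exact ⟨fun h j r hr => (h j r hr).symm, fun h j r hr => (h j r hr).symm⟩
  rw [sum_digitVec m (fun η => ∑ h' ∈ Finset.range (2 ^ m),
    ∏ j, agree (extv ((C j).mulVec η)) (extv ((C j).mulVec (digitVec 2 m h'))) (i j))]
  have e2 : ∀ η : Fin m → ZMod 2, ∑ h' ∈ Finset.range (2 ^ m),
      ∏ j, agree (extv ((C j).mulVec η)) (extv ((C j).mulVec (digitVec 2 m h'))) (i j) = Qc C i := by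
    intro η
    rw [sum_digitVec m (fun η' => ∏ j, agree (extv ((C j).mulVec η)) (extv ((C j).mulVec η')) (i j))]
    simp only [e]
    refine ((Equiv.subRight η).sum_comp
      (fun ζ => if ∀ j, ∀ r < i j, rowv C j r ⬝ᵥ ζ = 0 then (1 : ℝ) else 0)).trans ?_
    rw [Finset.sum_boole]
    unfold Qc
    congr!
  simp only [e2]
  simp

/-! ### Final estimate -/

lemma geom_tail (M L : ℕ) : ∀ S : ℕ,
    ∑ a ∈ Finset.range L, (if M < a + S then (1 / 2 : ℝ) ^ (a + S) else 0)
      ≤ 2 * (1 / 2) ^ (max S (M + 1)) := by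
  induction L with
  | zero => intro S; simp
  | succ L ih =>
    intro S
    rw [Finset.sum_range_succ']
    have := ih (S + 1)
    simp only [add_assoc, add_comm 1 S, zero_add] at this ⊢
    by_cases h : M < S
    · rw [if_pos h]
      rw [max_eq_left (by omega)] at this ⊢
      rw [pow_succ] at this
      linarith
    · rw [if_neg h]
      rw [max_eq_right (by omega)] at this ⊢
      linarith

lemma box_tail (s M L : ℕ) :
    ∑ i ∈ Fintype.piFinset (fun _ : Fin (s + 1) => Finset.range L),
      (if M < ∑ j, i j then (1 / 2 : ℝ) ^ (∑ j, i j) else 0) ≤ (L : ℝ) ^ s * (1 / 2) ^ M := by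
  have e : ∑ i ∈ Fintype.piFinset (fun _ : Fin (s + 1) => Finset.range L),
      (if M < ∑ j, i j then (1 / 2 : ℝ) ^ (∑ j, i j) else 0) =
      ∑ p ∈ (Fintype.piFinset (fun _ : Fin s => Finset.range L)) ×ˢ Finset.range L,
        (if M < p.2 + ∑ j, p.1 j then (1 / 2 : ℝ) ^ (p.2 + ∑ j, p.1 j) else 0) := by
    refine Finset.sum_nbij' (fun i => (fun j => i j.succ, i 0)) (fun p => Fin.cons p.2 p.1)
      ?_ ?_ ?_ ?_ ?_
    · intro i hi
      simp only [Fintype.mem_piFinset, Finset.mem_product] at hi ⊢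
      exact ⟨fun j => hi _, hi _⟩
    · intro p hp
      simp only [Fintype.mem_piFinset, Finset.mem_product] at hp ⊢
      intro j
      refine Fin.cases ?_ ?_ j
      · simpa using hp.2
      · intro j; simpa using hp.1 j
    · intro i _
      exact Fin.cons_self_tail i
    · intro p _
      simp
    · intro i _
      rw [Fin.sum_univ_succ]
  rw [e, Finset.sum_product]
  have h : ∀ i ∈ Fintype.piFinset (fun _ : Fin s => Finset.range L),
      ∑ a ∈ Finset.range L, (if M < a + ∑ j, i j then (1 / 2 : ℝ) ^ (a + ∑ j, i j) else 0)
      ≤ (1 / 2) ^ M := by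
    intro i _
    refine (geom_tail M L _).trans ?_
    have : (1 / 2 : ℝ) ^ (max (∑ j, i j) (M + 1)) ≤ (1 / 2) ^ (M + 1) :=
      pow_le_pow_of_le_one (by norm_num) (by norm_num) (le_max_right _ _)
    rw [pow_succ] at this
    linarith
  refine (Finset.sum_le_sum h).trans ?_
  simp

lemma third_bound (L : ℕ) : ∑ i ∈ Finset.range L, (1 / 4 : ℝ) ^ (i + 1) ≤ 1 / 3 := by
  have : ∀ L, ∑ i ∈ Finset.range L, (1 / 4 : ℝ) ^ (i + 1) = 1 / 3 - 1 / 3 * (1 / 4) ^ L := by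
    intro L
    induction L with
    | zero => simp
    | succ L ih => rw [Finset.sum_range_succ, ih]; ring
  rw [this]
  have : (0 : ℝ) < (1 / 4) ^ L := by positivity
  linarith

lemma main_bound {s n m t : ℕ} (C : Fin (s + 1) → Matrix (Fin n) (Fin m) (ZMod 2))
    (hC : (m : ℤ) - t + 1 ≤ minWeight 2 1 C) :
    (∫ δ in cube (s + 1), sqL2 (2 ^ m) (fun h => dshiftV 2 (netPoint 2 C h) δ))
      ≤ ((m - t + 2 : ℕ) : ℝ) ^ s * ((1 / 2) ^ (m - t) * (1 / 2) ^ (m - t)) := by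
  set M := m - t with hM
  simp only [netPoint_eq]
  refine (mean_formula (2 ^ m) (by positivity)
    (fun h j => extv ((C j).mulVec (digitVec 2 m h))) ?_ (M + 1)).trans ?_
  · intro h h' j r hr
    simp [extv, Nat.not_lt.2 hr]
  have hN : ((2 ^ m : ℕ) : ℝ) = 2 ^ m := by push_cast; rfl
  rw [hN]
  set B := Fintype.piFinset (fun _ : Fin (s + 1) => Finset.range (M + 1 + 1)) with hB
  have e1 : (∑ h ∈ Finset.range (2 ^ m), ∑ h' ∈ Finset.range (2 ^ m),
      ((1 / (2 : ℝ) ^ m) ^ 2 * ∏ j, ∑ i ∈ Finset.range (M + 1 + 1), wt (M + 1) i *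
        agree (extv ((C j).mulVec (digitVec 2 m h))) (extv ((C j).mulVec (digitVec 2 m h'))) i)) =
      ∑ i ∈ B, (∏ j, wt (M + 1) (i j)) * ((Qc C i : ℝ) / 2 ^ m) := by
    simp only [Finset.prod_univ_sum, Finset.prod_mul_distrib, Finset.mul_sum]
    rw [Finset.sum_congr rfl fun h _ => Finset.sum_comm, Finset.sum_comm]
    refine Finset.sum_congr rfl fun i _ => ?_
    simp only [← Finset.mul_sum]
    rw [pair_sum]
    field_simp
  have e2 : ∑ i ∈ B, ∏ j, (1 / 4 : ℝ) ^ (i j + 1) ≤ (1 / 3) ^ (s + 1) := by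
    rw [hB, ← Finset.prod_univ_sum (fun _ : Fin (s + 1) => Finset.range (M + 1 + 1))
      (fun _ i => (1 / 4 : ℝ) ^ (i + 1))]
    rw [Finset.prod_const, Finset.card_univ, Fintype.card_fin]
    exact pow_le_pow_left₀ (by positivity) (third_bound _) _
  rw [e1]
  have e3 : ∀ i ∈ B, (∏ j, wt (M + 1) (i j)) * ((Qc C i : ℝ) / 2 ^ m)
      - ∏ j, (1 / 4 : ℝ) ^ (i j + 1) ≤
      (if M < ∑ j, i j then (1 / 2 : ℝ) ^ (∑ j, i j) else 0) * (1 / 2) ^ M := by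
    intro i _
    split_ifs with h
    · have hQ := Qc_le C hC i h.le
      have hQ' : (Qc C i : ℝ) * 2 ^ M ≤ 2 ^ m := by exact_mod_cast hQ
      have hQ'' : (Qc C i : ℝ) / 2 ^ m ≤ (1 / 2) ^ M := by
        rw [one_div, inv_pow, div_le_iff₀ (by positivity), ← div_eq_inv_mul,
          le_div_iff₀ (by positivity)]
        exact hQ'
      have hw : ∏ j, wt (M + 1) (i j) ≤ (1 / 2 : ℝ) ^ (∑ j, i j) := by
        rw [← Finset.prod_pow_eq_pow_sum]
        refine Finset.prod_le_prod (fun j _ => wt_nonneg _ _) fun j _ => ?_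
        unfold wt
        split_ifs
        · exact pow_le_pow_of_le_one (by norm_num) (by norm_num) (by omega)
        · exact pow_le_pow_of_le_one (by norm_num) (by norm_num) (by omega)
      have h3 : (∏ j, wt (M + 1) (i j)) * ((Qc C i : ℝ) / 2 ^ m) ≤
          (1 / 2 : ℝ) ^ (∑ j, i j) * (1 / 2) ^ M :=
        mul_le_mul hw hQ'' (by positivity) (by positivity)
      have h4 : 0 ≤ ∏ j, (1 / 4 : ℝ) ^ (i j + 1) := by positivity
      linarith
    · have hQ := Qc_eq C hC i (by omega)
      have hQ' : (Qc C i : ℝ) * 2 ^ (∑ j, i j) = 2 ^ m := by exact_mod_cast hQ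
      have hQ'' : (Qc C i : ℝ) / 2 ^ m = ∏ j, (1 / 2 : ℝ) ^ (i j) := by
        rw [Finset.prod_pow_eq_pow_sum, one_div, inv_pow, ← hQ']
        have : (Qc C i : ℝ) ≠ 0 := by
          intro h0; rw [h0, zero_mul] at hQ'
          exact absurd hQ' (by positivity)
        field_simp
      rw [hQ'', ← Finset.prod_mul_distrib]
      have : ∀ j ∈ Finset.univ, wt (M + 1) (i j) * (1 / 2 : ℝ) ^ (i j) = (1 / 4 : ℝ) ^ (i j + 1) := by
        intro j _
        have hj : i j ≤ ∑ j, i j := Finset.single_le_sum (fun _ _ => Nat.zero_le _) (Finset.mem_univ j)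
        unfold wt
        rw [if_pos (by omega)]
        have : (1 / 4 : ℝ) = (1 / 2) ^ 2 := by norm_num
        rw [this, ← pow_mul, ← pow_add]
        congr 1; ring
      rw [Finset.prod_congr rfl this]
      simp
  have e4 := Finset.sum_le_sum e3
  rw [Finset.sum_sub_distrib, ← Finset.sum_mul] at e4
  have e5 := box_tail s M (M + 1 + 1)
  have e6 := mul_le_mul_of_nonneg_right e5 (by positivity : (0 : ℝ) ≤ (1 / 2) ^ M)
  rw [mul_assoc] at e6
  linarith

end

/-- Theorem 5.4: the shift-averaged squared `L_2`-discrepancy of a digital `(t,m,s)`-net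
over `F_2` is of order `m^{s-1}/2^{2m}`. -/
theorem stmt_12 (s : ℕ) (hs : 0 < s) (t : ℕ) :
    ∃ D : ℝ, 0 < D ∧
      ∀ m : ℕ, 0 < m → ∀ n : ℕ, ∀ C : Fin s → Matrix (Fin n) (Fin m) (ZMod 2),
        (m : ℤ) - t + 1 ≤ minWeight 2 1 C →
        (∫ δ in cube s, sqL2 (2 ^ m) (fun h => dshiftV 2 (netPoint 2 C h) δ))
          ≤ D * (m : ℝ) ^ (s - 1) / 2 ^ (2 * m) := by
  obtain ⟨s, rfl⟩ : ∃ s', s = s' + 1 := ⟨s - 1, by omega⟩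
  refine ⟨3 ^ s * 4 ^ t, by positivity, fun m hm n C hC => (main_bound C hC).trans ?_⟩
  rw [Nat.add_sub_cancel]
  have h1 : ((m - t + 2 : ℕ) : ℝ) ^ s ≤ 3 ^ s * (m : ℝ) ^ s := by
    rw [← mul_pow]
    refine pow_le_pow_left₀ (by positivity) ?_ _
    exact_mod_cast (by omega : m - t + 2 ≤ 3 * m)
  have h2 : (1 / 2 : ℝ) ^ (m - t) * (1 / 2) ^ (m - t) ≤ 4 ^ t / 2 ^ (2 * m) := by
    rw [← mul_pow, one_div, ← mul_inv, inv_pow, pow_mul]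
    norm_num
    rw [le_div_iff₀ (by positivity), inv_mul_le_iff₀ (by positivity), ← pow_add]
    exact pow_le_pow_right₀ (by norm_num) (by omega)
  calc _ ≤ (3 ^ s * (m : ℝ) ^ s) * (4 ^ t / 2 ^ (2 * m)) :=
        mul_le_mul h1 h2 (by positivity) (by positivity)
    _ = _ := by ring
end

section
/- For all s in N and t_3 in N_0 there exists a constant D > 0 such that the following holds: for every m in N and every digital net P over F_2 with n x m generating matrices satisfying mu_3(P^perp) >= 3m - t_3 + 1 (i.e., P is an order 3 digital (t_3, m, s)-net over F_2), (L_2(P))^2 <= D m^{s-1} / 2^{2m}. -/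
open MeasureTheory Finset Matrix

lemma hx_prod_sum {ι K : Type*} [Fintype ι] [DecidableEq ι] [Fintype K] (f : ι → K → ℝ) :
    ∏ j, ∑ x, f j x = ∑ x : ι → K, ∏ j, f j (x j) := by
  rw [Finset.prod_univ_sum, Fintype.piFinset_univ]

lemma hx_orth_pi {ι K X : Type*} [Fintype ι] [DecidableEq ι] [Fintype K] [DecidableEq X]
    (χ : K → X → ℝ) (c : ℝ)
    (h : ∀ x x', ∑ k, χ k x * χ k x' = if x = x' then c else 0) (x x' : ι → X) :
    ∑ k : ι → K, (∏ j, χ (k j) (x j)) * (∏ j, χ (k j) (x' j))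
      = if x = x' then c ^ (Fintype.card ι) else 0 := by
  simp_rw [← Finset.prod_mul_distrib]
  rw [← hx_prod_sum (fun j k => χ k (x j) * χ k (x' j))]
  simp_rw [h]
  split_ifs with hx
  · subst hx; simp
  · obtain ⟨j, hj⟩ := Function.ne_iff.mp hx
    exact Finset.prod_eq_zero (Finset.mem_univ j) (by simp [hj])

lemma hx_parseval {K X : Type*} [Fintype K] [Fintype X] [DecidableEq X]
    (χ : K → X → ℝ) (c : ℝ)
    (h : ∀ x x', ∑ k, χ k x * χ k x' = if x = x' then c else 0) (f : X → ℝ) :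
    ∑ k, (∑ x, f x * χ k x) ^ 2 = c * ∑ x, f x ^ 2 := by
  have : ∀ k, (∑ x, f x * χ k x) ^ 2 = ∑ x, ∑ x', f x * f x' * (χ k x * χ k x') := by
    intro k
    rw [sq, Finset.sum_mul_sum]
    refine Finset.sum_congr rfl fun x _ => Finset.sum_congr rfl fun x' _ => by ring
  simp_rw [this]
  rw [Finset.sum_comm, Finset.mul_sum]
  refine Finset.sum_congr rfl fun x _ => ?_
  rw [Finset.sum_comm]
  simp_rw [← Finset.mul_sum, h]
  simp
  ring

lemma hx_inv {K X : Type*} [Fintype K] [Fintype X] [DecidableEq X]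
    (χ : K → X → ℝ) (c : ℝ)
    (h : ∀ x x', ∑ k, χ k x * χ k x' = if x = x' then c else 0) (g : X → ℝ) (z : X) :
    c * g z = ∑ k, (∑ x, g x * χ k x) * χ k z := by
  simp_rw [Finset.sum_mul]
  rw [Finset.sum_comm]
  simp_rw [mul_assoc, ← Finset.mul_sum, h]
  simp
  ring

lemma hx_z2 (a : ZMod 2) : a = 0 ∨ a = 1 := by
  revert a; decide

noncomputable def hxSg (a : ZMod 2) : ℝ := if a = 0 then 1 else -1

lemma hxSg_add (a b : ZMod 2) : hxSg (a + b) = hxSg a * hxSg b := by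
  have h2 : (1 : ZMod 2) + 1 = 0 := by decide
  rcases hx_z2 a with rfl | rfl <;> rcases hx_z2 b with rfl | rfl <;> simp [hxSg, h2]

lemma hxSg_zero : hxSg 0 = 1 := by simp [hxSg]

lemma hxSg_abs (a : ZMod 2) : |hxSg a| = 1 := by
  unfold hxSg; split_ifs <;> simp

lemma hxSg_sum {ι : Type*} (S : Finset ι) (f : ι → ZMod 2) :
    hxSg (∑ i ∈ S, f i) = ∏ i ∈ S, hxSg (f i) := by
  classical
  induction S using Finset.induction_on with
  | empty => simp [hxSg_zero]
  | insert a S ha ih => rw [Finset.sum_insert ha, Finset.prod_insert ha, hxSg_add, ih]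

lemma hxSg_orth (x x' : ZMod 2) :
    ∑ k : ZMod 2, hxSg (k * x) * hxSg (k * x') = if x = x' then 2 else 0 := by
  have : (Finset.univ : Finset (ZMod 2)) = {0, 1} := by decide
  rw [this, Finset.sum_pair (by decide)]
  rcases hx_z2 x with rfl | rfl <;> rcases hx_z2 x' with rfl | rfl <;> simp [hxSg] <;> norm_num

noncomputable def hxCh {m : ℕ} (k x : Fin m → ZMod 2) : ℝ := ∏ i, hxSg (k i * x i)

lemma hxCh_orth {m : ℕ} (x x' : Fin m → ZMod 2) :
    ∑ k, hxCh k x * hxCh k x' = if x = x' then (2 : ℝ) ^ m else 0 := by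
  have := hx_orth_pi (ι := Fin m) (fun k x : ZMod 2 => hxSg (k * x)) 2 hxSg_orth x x'
  simpa [hxCh] using this

lemma hxCh_comm {m : ℕ} (k x : Fin m → ZMod 2) : hxCh k x = hxCh x k := by
  simp [hxCh, mul_comm]

lemma hxCh_abs {m : ℕ} (k x : Fin m → ZMod 2) : |hxCh k x| = 1 := by
  simp [hxCh, Finset.abs_prod, hxSg_abs]

lemma hxCh_zero {m : ℕ} (x : Fin m → ZMod 2) : hxCh 0 x = 1 := by
  simp [hxCh, hxSg_zero]

lemma hxCh_eq {m : ℕ} (k x : Fin m → ZMod 2) : hxCh k x = hxSg (k ⬝ᵥ x) := by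
  simp [hxCh, dotProduct, hxSg_sum]

lemma hxCh_sum {m : ℕ} (k : Fin m → ZMod 2) :
    ∑ x, hxCh k x = if k = 0 then (2 : ℝ) ^ m else 0 := by
  have := hxCh_orth k 0
  rw [← this]
  refine Finset.sum_congr rfl fun x _ => ?_
  rw [hxCh_comm x 0, hxCh_zero, hxCh_comm, mul_one]

noncomputable def hxChV {s m : ℕ} (k x : Fin s → Fin m → ZMod 2) : ℝ := ∏ j, hxCh (k j) (x j)

lemma hxChV_orth {s m : ℕ} (x x' : Fin s → Fin m → ZMod 2) :
    ∑ k, hxChV k x * hxChV k x' = if x = x' then ((2 : ℝ) ^ m) ^ s else 0 := by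
  have := hx_orth_pi (ι := Fin s) (fun k x : Fin m → ZMod 2 => hxCh k x) _ hxCh_orth x x'
  simpa [hxChV] using this

lemma hxChV_zero {s m : ℕ} (x : Fin s → Fin m → ZMod 2) : hxChV 0 x = 1 := by
  simp [hxChV, hxCh_zero]

/-- truncated net points -/
def hxPt {s m : ℕ} (A : Fin s → Matrix (Fin m) (Fin m) (ZMod 2)) (h : Fin m → ZMod 2) :
    Fin s → Fin m → ZMod 2 := fun j => (A j).mulVec h

def hxDual {s m : ℕ} (A : Fin s → Matrix (Fin m) (Fin m) (ZMod 2)) :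
    Finset (Fin s → Fin m → ZMod 2) :=
  Finset.univ.filter fun k => ∑ j, (A j)ᵀ.mulVec (k j) = 0

lemma hx_duality {s m : ℕ} (A : Fin s → Matrix (Fin m) (Fin m) (ZMod 2))
    (k : Fin s → Fin m → ZMod 2) :
    ∑ h, hxChV k (hxPt A h) = if k ∈ hxDual A then (2 : ℝ) ^ m else 0 := by
  have h1 : ∀ h, hxChV k (hxPt A h) = hxCh (∑ j, (A j)ᵀ.mulVec (k j)) h := by
    intro h
    rw [hxCh_eq, sum_dotProduct, hxSg_sum, hxChV]
    refine Finset.prod_congr rfl fun j _ => ?_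
    rw [hxCh_eq, hxPt, dotProduct_mulVec, mulVec_transpose]
  simp_rw [h1, hxCh_sum]
  simp [hxDual]

lemma hx_net_avg {s m : ℕ} (A : Fin s → Matrix (Fin m) (Fin m) (ZMod 2))
    (g : (Fin s → Fin m → ZMod 2) → ℝ) :
    (∑ h, g (hxPt A h)) / 2 ^ m - (∑ x, g x) / (2 ^ m) ^ s
      = (∑ k ∈ (hxDual A).erase 0, ∑ x, g x * hxChV k x) / (2 ^ m) ^ s := by
  have h0 : (0 : Fin s → Fin m → ZMod 2) ∈ hxDual A := by simp [hxDual]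
  have h1 : ((2 : ℝ) ^ m) ^ s * ∑ h, g (hxPt A h)
      = 2 ^ m * ∑ k ∈ hxDual A, ∑ x, g x * hxChV k x := by
    rw [Finset.mul_sum]
    simp_rw [hx_inv hxChV _ hxChV_orth g]
    rw [Finset.sum_comm]
    simp_rw [← Finset.mul_sum, hx_duality]
    rw [Finset.mul_sum, ← Finset.sum_filter_add_sum_filter_not univ (fun k => k ∈ hxDual A)]
    rw [Finset.sum_eq_zero (s := univ.filter fun k => ¬ k ∈ hxDual A), add_zero]
    · have : univ.filter (fun k => k ∈ hxDual A) = hxDual A := by ext; simp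
      rw [this]
      refine Finset.sum_congr rfl fun k hk => ?_
      simp [hk]; ring
    · intro k hk
      simp at hk; simp [hk]
  rw [← Finset.add_sum_erase _ _ h0] at h1
  simp only [hxChV_zero, mul_one] at h1
  field_simp
  linarith

noncomputable def hxU {m : ℕ} (x : Fin m → ZMod 2) : ℝ := ∑ i, ((x i).val : ℝ) / 2 ^ (i.val + 1)

lemma hxU_succ {m : ℕ} (x : Fin (m + 1) → ZMod 2) :
    hxU x = ((x 0).val + hxU (Fin.tail x)) / 2 := by
  simp only [hxU, Fin.sum_univ_succ, Fin.tail, add_div, Finset.sum_div]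
  congr 1
  · simp
  · refine Finset.sum_congr rfl fun i _ => ?_
    simp only [Fin.val_succ]
    rw [div_div, ← pow_succ]

lemma hxU_nonneg {m : ℕ} (x : Fin m → ZMod 2) : 0 ≤ hxU x :=
  Finset.sum_nonneg fun _ _ => by positivity

lemma hxU_zero (x : Fin 0 → ZMod 2) : hxU x = 0 := by simp [hxU]

lemma hx_val (a : ZMod 2) : ((a.val : ℝ) = 0 ∧ a = 0) ∨ ((a.val : ℝ) = 1 ∧ a = 1) := by
  rcases hx_z2 a with rfl | rfl
  · left; simp
  · right; simp [ZMod.val_one]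

lemma hxU_le {m : ℕ} (x : Fin m → ZMod 2) : hxU x + 1 / 2 ^ m ≤ 1 := by
  induction m with
  | zero => simp [hxU_zero]
  | succ m ih =>
    have := ih (Fin.tail x)
    rw [hxU_succ, pow_succ, ← div_div]
    rcases hx_val (x 0) with ⟨h, _⟩ | ⟨h, _⟩ <;> rw [h] <;> linarith

lemma hxU_lt {m : ℕ} (x : Fin m → ZMod 2) : hxU x < 1 := by
  have := hxU_le x
  have : (0 : ℝ) < 1 / 2 ^ m := by positivity
  linarith

lemma hxU_tri {m : ℕ} (x q : Fin m → ZMod 2) :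
    hxU x + 1 / 2 ^ m ≤ hxU q ∨ x = q ∨ hxU q + 1 / 2 ^ m ≤ hxU x := by
  induction m with
  | zero => right; left; exact Subsingleton.elim _ _
  | succ m ih =>
    rw [hxU_succ x, hxU_succ q, pow_succ, ← div_div]
    have hx := hxU_le (Fin.tail x)
    have hq := hxU_le (Fin.tail q)
    have hx0 := hxU_nonneg (Fin.tail x)
    have hq0 := hxU_nonneg (Fin.tail q)
    rcases hx_val (x 0) with ⟨h1, h1'⟩ | ⟨h1, h1'⟩ <;> rcases hx_val (q 0) with ⟨h2, h2'⟩ | ⟨h2, h2'⟩ <;> rw [h1, h2]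
    · rcases ih (Fin.tail x) (Fin.tail q) with h | h | h
      · left; linarith
      · right; left
        rw [← Fin.cons_self_tail x, ← Fin.cons_self_tail q, h, h1', h2']
      · right; right; linarith
    · left; linarith
    · right; right; linarith
    · rcases ih (Fin.tail x) (Fin.tail q) with h | h | h
      · left; linarith
      · right; left
        rw [← Fin.cons_self_tail x, ← Fin.cons_self_tail q, h, h1', h2']
      · right; right; linarith

lemma hxU_cell (m : ℕ) (y : ℝ) (h0 : 0 ≤ y) (h1 : y < 1) :
    ∃ q : Fin m → ZMod 2, hxU q ≤ y ∧ y < hxU q + 1 / 2 ^ m := by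
  induction m generalizing y with
  | zero => exact ⟨fun _ => 0, by simpa [hxU_zero] using h0, by simpa [hxU_zero] using h1⟩
  | succ m ih =>
    rcases lt_or_ge y (1 / 2) with h | h
    · obtain ⟨q, hq⟩ := ih (2 * y) (by linarith) (by linarith)
      refine ⟨Fin.cons 0 q, ?_⟩
      rw [hxU_succ, pow_succ, ← div_div]
      simp only [Fin.cons_zero, Fin.tail_cons, ZMod.val_zero, Nat.cast_zero]
      constructor <;> linarith [hq.1, hq.2]
    · obtain ⟨q, hq⟩ := ih (2 * y - 1) (by linarith) (by linarith)
      refine ⟨Fin.cons 1 q, ?_⟩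
      rw [hxU_succ, pow_succ, ← div_div]
      simp only [Fin.cons_zero, Fin.tail_cons, ZMod.val_one, Nat.cast_one]
      constructor <;> linarith [hq.1, hq.2]

noncomputable def hxL {m : ℕ} (x q : Fin m → ZMod 2) : ℝ := if hxU x ≤ hxU q then 1 else 0

lemma hxL_nonneg {m : ℕ} (x q : Fin m → ZMod 2) : 0 ≤ hxL x q := by
  unfold hxL; split_ifs <;> simp

lemma hxL_le {m : ℕ} (x q : Fin m → ZMod 2) : hxL x q ≤ 1 := by
  unfold hxL; split_ifs <;> simp

lemma hxL_eq {m : ℕ} (a b : ZMod 2) (x q : Fin m → ZMod 2) :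
    hxL (Fin.cons a x : Fin (m + 1) → ZMod 2) (Fin.cons b q) =
      if a = b then hxL x q else if a = 0 then 1 else 0 := by
  have hx := hxU_lt x
  have hq := hxU_lt q
  have hx0 := hxU_nonneg x
  have hq0 := hxU_nonneg q
  simp only [hxL, hxU_succ, Fin.cons_zero, Fin.tail_cons]
  rcases hx_val a with ⟨h1, rfl⟩ | ⟨h1, rfl⟩ <;> rcases hx_val b with ⟨h2, rfl⟩ | ⟨h2, rfl⟩ <;> simp only [h1, h2]
  · simp only [if_true]; congr 1; apply propext; constructor <;> intro h <;> linarith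
  · rw [if_pos (by linarith)]; simp
  · rw [if_neg (by linarith)]; simp
  · simp only [if_true]; congr 1; apply propext; constructor <;> intro h <;> linarith

lemma hx_sum_cons {m : ℕ} (f : (Fin (m + 1) → ZMod 2) → ℝ) :
    ∑ x, f x = ∑ x : Fin m → ZMod 2, f (Fin.cons 0 x) + ∑ x : Fin m → ZMod 2, f (Fin.cons 1 x) := by
  rw [← (Fin.consEquiv (fun _ : Fin (m + 1) => ZMod 2)).sum_comp, Fintype.sum_prod_type]
  have : (Finset.univ : Finset (ZMod 2)) = {0, 1} := by decide
  rw [this, Finset.sum_pair (by decide)]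
  rfl

lemma hxL_avg {m : ℕ} (q : Fin m → ZMod 2) :
    (∑ x, hxL x q) / 2 ^ m = hxU q + 1 / 2 ^ m := by
  induction m with
  | zero =>
    simp [hxU_zero, hxL]
  | succ m ih =>
    have ih' := ih (Fin.tail q)
    rw [← Fin.cons_self_tail q, hx_sum_cons, hxU_succ]
    simp only [hxL_eq, Fin.cons_zero, Fin.tail_cons]
    rw [div_eq_iff (by positivity)] at ih'
    rw [div_eq_iff (by positivity)]
    have e : (2 : ℝ) ^ (m + 1) = 2 * 2 ^ m := by ring
    have : (2 : ℝ) ^ m ≠ 0 := by positivity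
    rcases hx_val (q 0) with ⟨h1, h1'⟩ | ⟨h1, h1'⟩
    · rw [h1]
      simp only [h1', if_true, one_ne_zero, if_false, Finset.sum_const_zero]
      rw [ih', e]; field_simp; ring
    · rw [h1]
      simp only [h1', if_true, zero_ne_one, if_false, Finset.sum_const, Finset.card_univ]
      rw [ih', e]; simp; field_simp; ring

lemma hxCh_cons {m : ℕ} (k : Fin (m + 1) → ZMod 2) (a : ZMod 2) (x : Fin m → ZMod 2) :
    hxCh k (Fin.cons a x) = hxSg (k 0 * a) * hxCh (Fin.tail k) x := by
  simp [hxCh, Fin.prod_univ_succ, Fin.tail]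

noncomputable def hxM {m : ℕ} (k l : Fin m → ZMod 2) : ℝ :=
  ∑ x, ∑ q, hxL x q * hxCh k x * hxCh l q

lemma hxM_succ {m : ℕ} (k l : Fin (m + 1) → ZMod 2) :
    hxM k l = hxSg (l 0) * (if Fin.tail k = 0 ∧ Fin.tail l = 0 then 4 ^ m else 0)
      + (1 + hxSg (k 0) * hxSg (l 0)) * hxM (Fin.tail k) (Fin.tail l) := by
  have h4 : (∑ x, hxCh (Fin.tail k) x) * (∑ q, hxCh (Fin.tail l) q) =
      (if Fin.tail k = 0 ∧ Fin.tail l = 0 then 4 ^ m else 0 : ℝ) := by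
    rw [hxCh_sum, hxCh_sum]
    by_cases h1 : Fin.tail k = 0 <;> by_cases h2 : Fin.tail l = 0 <;> simp [h1, h2, ← mul_pow]
    norm_num
  rw [← h4]
  unfold hxM
  rw [hx_sum_cons]
  simp only [hx_sum_cons (m := m), hxL_eq, hxCh_cons]
  simp only [if_true, one_ne_zero, zero_ne_one, if_false, mul_zero, mul_one, hxSg_zero, one_mul,
    zero_mul, Finset.sum_const_zero, Finset.sum_add_distrib, zero_add]
  rw [Finset.sum_mul_sum, Finset.mul_sum, add_mul, one_mul, Finset.mul_sum]
  simp only [Finset.mul_sum]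
  have e1 : ∀ x q : Fin m → ZMod 2, hxCh (Fin.tail k) x * (hxSg (l 0) * hxCh (Fin.tail l) q)
     = hxSg (l 0) * (hxCh (Fin.tail k) x * hxCh (Fin.tail l) q) := fun x q => by ring
  have e2 : ∀ x q : Fin m → ZMod 2, hxL x q * (hxSg (k 0) * hxCh (Fin.tail k) x) *
      (hxSg (l 0) * hxCh (Fin.tail l) q)
     = hxSg (k 0) * hxSg (l 0) * (hxL x q * hxCh (Fin.tail k) x * hxCh (Fin.tail l) q) :=
     fun x q => by ring
  simp only [e1, e2]
  ring

lemma hxM_abs {m : ℕ} (k l : Fin m → ZMod 2) : |hxM k l| ≤ 4 ^ m := by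
  unfold hxM
  refine (Finset.abs_sum_le_sum_abs _ _).trans ?_
  have : ∀ x : Fin m → ZMod 2, |∑ q, hxL x q * hxCh k x * hxCh l q| ≤ 2 ^ m := by
    intro x
    refine (Finset.abs_sum_le_sum_abs _ _).trans ?_
    refine (Finset.sum_le_sum (g := fun _ => (1 : ℝ)) fun q _ => ?_).trans ?_
    · rw [abs_mul, abs_mul, hxCh_abs, hxCh_abs, abs_of_nonneg (hxL_nonneg _ _)]
      simpa using hxL_le x q
    · simp
  refine (Finset.sum_le_sum fun x _ => this x).trans ?_
  simp [← mul_pow]; norm_num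

def hxa {m : ℕ} (k : Fin m → ZMod 2) : ℕ :=
  Finset.univ.sup fun i : Fin m => if k i ≠ 0 then i.val + 1 else 0

lemma hxa_le_iff {m : ℕ} (k : Fin m → ZMod 2) (A : ℕ) :
    hxa k ≤ A ↔ ∀ i, k i ≠ 0 → i.val + 1 ≤ A := by
  unfold hxa
  rw [Finset.sup_le_iff]
  refine forall_congr' fun i => ?_
  by_cases h : k i = 0 <;> simp [h]

lemma hxa_le {m : ℕ} (k : Fin m → ZMod 2) : hxa k ≤ m := by
  rw [hxa_le_iff]; intro i _; exact i.2

lemma hxa_ge {m : ℕ} (k : Fin m → ZMod 2) (i : Fin m) (h : k i ≠ 0) : i.val + 1 ≤ hxa k :=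
  (hxa_le_iff k _).1 le_rfl i h

def hxRel {m : ℕ} (k l : Fin m → ZMod 2) : Prop :=
  ∀ i i' : Fin m, i < i' → k i ≠ l i → k i' = 0 ∧ l i' = 0

instance {m : ℕ} (k l : Fin m → ZMod 2) : Decidable (hxRel k l) := by
  unfold hxRel; infer_instance

lemma hxRel_symm {m : ℕ} {k l : Fin m → ZMod 2} (h : hxRel k l) : hxRel l k :=
  fun i i' hi hk => (h i i' hi hk.symm).symm

lemma hxa_tail {m : ℕ} (k : Fin (m + 1) → ZMod 2) : hxa k ≤ hxa (Fin.tail k) + 1 := by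
  rw [hxa_le_iff]
  intro i
  refine Fin.cases ?_ (fun i => ?_) i
  · intro _; simp
  · intro h
    have := hxa_ge (Fin.tail k) i h
    simp; omega

lemma hxa_zero {m : ℕ} : hxa (0 : Fin m → ZMod 2) = 0 := by
  simp [hxa]

lemma hxM_bound {m : ℕ} (k l : Fin m → ZMod 2) :
    |hxM k l| * 2 ^ (max (hxa k) (hxa l)) ≤ 2 * 4 ^ m ∧ (¬ hxRel k l → hxM k l = 0) := by
  induction m with
  | zero =>
    constructor
    · have h1 : hxa k = 0 := Nat.le_zero.1 (hxa_le k)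
      have h2 : hxa l = 0 := Nat.le_zero.1 (hxa_le l)
      have := hxM_abs k l
      simp only [h1, h2, max_self, pow_zero, mul_one] at *
      linarith
    · intro h; exact absurd (fun i => i.elim0) h
  | succ m ih =>
    obtain ⟨ih1, ih2⟩ := ih (Fin.tail k) (Fin.tail l)
    have hk := hxa_tail k
    have hl := hxa_tail l
    have hab : |1 + hxSg (k 0) * hxSg (l 0)| ≤ 2 := by
      refine (abs_add_le _ _).trans ?_
      rw [abs_mul, hxSg_abs, hxSg_abs]; norm_num
    have e : (4 : ℝ) ^ (m + 1) = 4 * 4 ^ m := by ring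
    rw [hxM_succ, e]
    by_cases hz : Fin.tail k = 0 ∧ Fin.tail l = 0
    · rw [if_pos hz]
      constructor
      · have h1 : max (hxa k) (hxa l) ≤ 1 := by
          rw [hz.1, hxa_zero] at hk; rw [hz.2, hxa_zero] at hl; omega
        have h2 : (2 : ℝ) ^ max (hxa k) (hxa l) ≤ 2 := by
          simpa using pow_le_pow_right₀ (by norm_num : (1 : ℝ) ≤ 2) h1
        have h3 : |hxSg (l 0) * 4 ^ m + (1 + hxSg (k 0) * hxSg (l 0)) *
            hxM (Fin.tail k) (Fin.tail l)| ≤ 3 * 4 ^ m := by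
          refine (abs_add_le _ _).trans ?_
          rw [abs_mul, abs_mul, hxSg_abs, abs_of_pos (by positivity : (0 : ℝ) < 4 ^ m)]
          have := mul_le_mul hab (hxM_abs (Fin.tail k) (Fin.tail l)) (abs_nonneg _) (by norm_num)
          linarith
        have := mul_le_mul h3 h2 (by positivity) (by positivity)
        have : (0 : ℝ) < 4 ^ m := by positivity
        linarith
      · intro h
        exfalso; apply h
        intro i i' hi _
        obtain ⟨i'', rfl⟩ := Fin.exists_succ_eq.2 (Fin.ne_zero_of_lt hi)
        exact ⟨congrFun hz.1 i'', congrFun hz.2 i''⟩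
    · rw [if_neg hz, mul_zero, zero_add]
      constructor
      · have h1 : max (hxa k) (hxa l) ≤ max (hxa (Fin.tail k)) (hxa (Fin.tail l)) + 1 := by omega
        have h2 := pow_le_pow_right₀ (by norm_num : (1 : ℝ) ≤ 2) h1
        rw [pow_succ] at h2
        rw [abs_mul]
        calc _ ≤ (2 * |hxM (Fin.tail k) (Fin.tail l)|) *
              (2 ^ max (hxa (Fin.tail k)) (hxa (Fin.tail l)) * 2) := by gcongr
          _ ≤ _ := by linarith
      · intro h
        by_cases h0 : k 0 = l 0
        · rw [ih2, mul_zero]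
          intro hr
          apply h
          intro i i' hi hne
          obtain ⟨i'', rfl⟩ := Fin.exists_succ_eq.2 (Fin.ne_zero_of_lt hi)
          have hi0 : i ≠ 0 := by rintro rfl; exact hne h0
          obtain ⟨i₁, rfl⟩ := Fin.exists_succ_eq.2 hi0
          exact hr i₁ i'' (by simpa using hi) hne
        · have : 1 + hxSg (k 0) * hxSg (l 0) = 0 := by
            rcases hx_z2 (k 0) with a | a <;> rcases hx_z2 (l 0) with b | b <;>
              simp [a, b, hxSg] at h0 ⊢
          rw [this, zero_mul]

noncomputable def hxDd {s m : ℕ} (A : Fin s → Matrix (Fin m) (Fin m) (ZMod 2))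
    (q : Fin s → Fin m → ZMod 2) : ℝ :=
  (∑ h, ∏ j, hxL (hxPt A h j) (q j)) / 2 ^ m - ∏ j, ((∑ x, hxL x (q j)) / 2 ^ m)

lemma hxDd_hat {s m : ℕ} (A : Fin s → Matrix (Fin m) (Fin m) (ZMod 2))
    (l : Fin s → Fin m → ZMod 2) :
    ∑ q, hxDd A q * hxChV l q
      = (2 ^ m) ^ s * ∑ k ∈ (hxDual A).erase 0, ∏ j, (hxM (k j) (l j) / 4 ^ m) := by
  have h := hx_net_avg A (fun x => ∑ q : Fin s → Fin m → ZMod 2, (∏ j, hxL (x j) (q j)) * hxChV l q)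
  have h2 : ∀ k : Fin s → Fin m → ZMod 2,
      ∑ x : Fin s → Fin m → ZMod 2,
        (∑ q : Fin s → Fin m → ZMod 2, (∏ j, hxL (x j) (q j)) * hxChV l q) * hxChV k x
      = ∏ j, hxM (k j) (l j) := by
    intro k
    unfold hxM
    rw [hx_prod_sum]
    refine Finset.sum_congr rfl fun x _ => ?_
    rw [hx_prod_sum, Finset.sum_mul]
    refine Finset.sum_congr rfl fun q _ => ?_
    simp only [hxChV, ← Finset.prod_mul_distrib]
    exact Finset.prod_congr rfl fun j _ => by ring
  simp_rw [h2] at h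
  have h3 : ∑ q, hxDd A q * hxChV l q =
      (∑ h, ∑ q : Fin s → Fin m → ZMod 2, (∏ j, hxL (hxPt A h j) (q j)) * hxChV l q) / 2 ^ m
      - (∑ x : Fin s → Fin m → ZMod 2,
        ∑ q : Fin s → Fin m → ZMod 2, (∏ j, hxL (x j) (q j)) * hxChV l q) / (2 ^ m) ^ s := by
    have e : ∀ q : Fin s → Fin m → ZMod 2, hxDd A q * hxChV l q =
       (∑ h, (∏ j, hxL (hxPt A h j) (q j)) * hxChV l q) / 2 ^ m
      - (∑ x : Fin s → Fin m → ZMod 2, (∏ j, hxL (x j) (q j)) * hxChV l q) / (2 ^ m) ^ s := by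
      intro q
      unfold hxDd
      rw [Finset.prod_div_distrib, hx_prod_sum, ← Finset.sum_mul, ← Finset.sum_mul]
      simp only [Finset.prod_const, Finset.card_univ, Fintype.card_fin]
      ring
    simp_rw [e]
    rw [Finset.sum_sub_distrib, ← Finset.sum_div, ← Finset.sum_div]
    congr 2
    · exact Finset.sum_comm
    · exact Finset.sum_comm
  rw [h3, h]
  simp only [Finset.prod_div_distrib, Finset.prod_const, Finset.card_univ, Fintype.card_fin]
  rw [← Finset.sum_div]
  have : (4 : ℝ) ^ m = 2 ^ m * 2 ^ m := by rw [← mul_pow]; norm_num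
  rw [this, mul_pow]
  field_simp

lemma hxDd_sq {s m : ℕ} (A : Fin s → Matrix (Fin m) (Fin m) (ZMod 2)) :
    (∑ q, hxDd A q ^ 2) / (2 ^ m) ^ s
      = ∑ l : Fin s → Fin m → ZMod 2, (∑ k ∈ (hxDual A).erase 0, ∏ j, (hxM (k j) (l j) / 4 ^ m)) ^ 2 := by
  have h := hx_parseval hxChV _ hxChV_orth (hxDd A)
  simp_rw [hxDd_hat, mul_pow] at h
  rw [← Finset.mul_sum] at h
  have : (((2 : ℝ) ^ m) ^ s) ≠ 0 := by positivity
  rw [div_eq_iff this]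
  apply mul_left_cancel₀ this
  rw [← h]; ring

def hxMx {s m : ℕ} (k l : Fin s → Fin m → ZMod 2) : Fin s → Fin (m + 1) := fun j =>
  ⟨max (hxa (k j)) (hxa (l j)), by have := hxa_le (k j); have := hxa_le (l j); omega⟩

def hxT {s m : ℕ} (M : Fin s → Fin (m + 1)) : ℕ := ∑ j, (M j).val

noncomputable def hxe {s m : ℕ} (k l : Fin s → Fin m → ZMod 2) : ℝ :=
  if ∀ j, hxRel (k j) (l j) then (1 / 2 : ℝ) ^ hxT (hxMx k l) else 0

lemma hxe_nonneg {s m : ℕ} (k l : Fin s → Fin m → ZMod 2) : 0 ≤ hxe k l := by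
  unfold hxe; split_ifs <;> positivity

lemma hxe_bound {s m : ℕ} (k l : Fin s → Fin m → ZMod 2) :
    |∏ j, (hxM (k j) (l j) / 4 ^ m)| ≤ 2 ^ s * hxe k l := by
  unfold hxe
  split_ifs with h
  · rw [Finset.abs_prod, hxT, ← Finset.prod_pow_eq_pow_sum]
    have : (2 : ℝ) ^ s = ∏ j : Fin s, 2 := by simp
    rw [this, ← Finset.prod_mul_distrib]
    refine Finset.prod_le_prod (fun _ _ => abs_nonneg _) fun j _ => ?_
    have := (hxM_bound (k j) (l j)).1
    rw [abs_div, abs_of_pos (by positivity : (0 : ℝ) < 4 ^ m), div_le_iff₀ (by positivity)]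
    simp only [hxMx, one_div, inv_pow]
    rw [mul_right_comm, ← div_eq_mul_inv, le_div_iff₀ (by positivity)]
    exact this
  · push Not at h
    obtain ⟨j, hj⟩ := h
    rw [Finset.prod_eq_zero (Finset.mem_univ j)]
    · simp
    · rw [(hxM_bound (k j) (l j)).2 hj, zero_div]

lemma hx_diff {m : ℕ} {k l : Fin m → ZMod 2} (h : hxRel k l) (i : Fin m) (hi : k i ≠ l i) :
    i.val + 1 = max (hxa k) (hxa l) := by
  apply le_antisymm
  · by_cases h0 : k i = 0
    · exact (hxa_ge l i (fun h' => hi (h0.trans h'.symm))).trans (le_max_right _ _)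
    · exact (hxa_ge k i h0).trans (le_max_left _ _)
  · apply max_le
    · rw [hxa_le_iff]
      intro i' hi'
      by_contra hlt
      exact hi' (h i i' (Fin.lt_def.2 (by omega)) hi).1
    · rw [hxa_le_iff]
      intro i' hi'
      by_contra hlt
      exact hi' (h i i' (Fin.lt_def.2 (by omega)) hi).2

lemma hx_fiber1 {m : ℕ} (l : Fin m → ZMod 2) (n : ℕ) :
    #{k | hxRel k l ∧ max (hxa k) (hxa l) = n} ≤ 2 := by
  have : #(Finset.univ : Finset (ZMod 2)) = 2 := by simp [ZMod.card]
  refine le_of_le_of_eq ?_ this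
  refine Finset.card_le_card_of_injOn
    (fun k => if h : n - 1 < m then k ⟨n - 1, h⟩ else 0) (fun _ _ => by simp) ?_
  intro k hk k' hk' hkk
  simp only [Finset.coe_filter, Finset.mem_univ, true_and, Set.mem_ofPred_eq] at hk hk'
  funext i
  by_cases hi : i.val + 1 = n
  · have : n - 1 < m := by omega
    simp only [this, dif_pos] at hkk
    have e : i = ⟨n - 1, this⟩ := Fin.ext (by simp; omega)
    rw [e]; exact hkk
  · have h1 : k i = l i := by
      by_contra hne
      exact hi ((hx_diff hk.1 i hne).trans hk.2)
    have h2 : k' i = l i := by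
      by_contra hne
      exact hi ((hx_diff hk'.1 i hne).trans hk'.2)
    rw [h1, h2]

lemma hx_fiber {s m : ℕ} (l : Fin s → Fin m → ZMod 2) (M : Fin s → Fin (m + 1)) :
    #{k : Fin s → Fin m → ZMod 2 | (∀ j, hxRel (k j) (l j)) ∧ hxMx k l = M} ≤ 2 ^ s := by
  have : ({k : Fin s → Fin m → ZMod 2 | (∀ j, hxRel (k j) (l j)) ∧ hxMx k l = M} : Finset _)
      ⊆ Fintype.piFinset fun j => {k | hxRel k (l j) ∧ max (hxa k) (hxa (l j)) = (M j).val} := by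
    intro k hk
    simp only [Finset.mem_filter, Finset.mem_univ, true_and, Fintype.mem_piFinset] at hk ⊢
    intro j
    refine ⟨hk.1 j, ?_⟩
    rw [← hk.2]; rfl
  refine (Finset.card_le_card this).trans ?_
  rw [Fintype.card_piFinset]
  refine (Finset.prod_le_prod' (g := fun _ => 2) fun j _ => hx_fiber1 (l j) _).trans ?_
  simp

lemma hx_nbrs {s m : ℕ} (l : Fin s → Fin m → ZMod 2) :
    #{k : Fin s → Fin m → ZMod 2 | ∀ j, hxRel (k j) (l j)} ≤ 2 ^ s * (m + 1) ^ s := by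
  rw [Finset.card_eq_sum_card_fiberwise (f := fun k => hxMx k l) (t := Finset.univ)
    (fun _ _ => by simp)]
  refine (Finset.sum_le_sum (g := fun _ => 2 ^ s) fun M _ => ?_).trans ?_
  · rw [Finset.filter_filter]; exact hx_fiber l M
  · simp [mul_comm]

lemma hx_exists_b {s : ℕ} (M : Fin s → ℕ) (c : ℕ) (hc : c ≤ ∑ j, M j) :
    ∃ b : Fin s → ℕ, (∀ j, b j ≤ M j) ∧ ∑ j, b j = c := by
  induction c with
  | zero => exact ⟨fun _ => 0, by simp, by simp⟩
  | succ c ih =>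
    obtain ⟨b, hb, hs⟩ := ih (by omega)
    have : ∃ j, b j < M j := by
      by_contra hcon
      push Not at hcon
      have := Finset.sum_le_sum (s := univ) fun j _ => hcon j
      omega
    obtain ⟨j, hj⟩ := this
    refine ⟨b + Pi.single j 1, ?_, ?_⟩
    · intro i
      by_cases h : i = j
      · subst h; simp; omega
      · simp [h, hb i]
    · simp [Finset.sum_add_distrib, hs]

lemma hxDual_sub {s m : ℕ} (A : Fin s → Matrix (Fin m) (Fin m) (ZMod 2))
    {k k' : Fin s → Fin m → ZMod 2} (h : k ∈ hxDual A) (h' : k' ∈ hxDual A) :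
    k - k' ∈ hxDual A := by
  simp only [hxDual, Finset.mem_filter, Finset.mem_univ, true_and] at *
  simp [mulVec_sub, h, h']

lemma hx_count {s m t : ℕ} (A : Fin s → Matrix (Fin m) (Fin m) (ZMod 2)) (htm : t ≤ m)
    (H1 : ∀ k ∈ hxDual A, k ≠ 0 → m < ∑ j, hxa (k j) + t)
    (M : Fin s → ℕ) (hM : m ≤ ∑ j, M j + t) :
    #{k ∈ hxDual A | ∀ j, hxa (k j) ≤ M j} * 2 ^ m ≤ 2 ^ (∑ j, M j + t) := by
  obtain ⟨b, hb, hbs⟩ := hx_exists_b M (m - t) (by omega)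
  have hcard : #{k ∈ hxDual A | ∀ j, hxa (k j) ≤ M j} ≤
      #(Finset.univ : Finset ((j : Fin s) → Fin (M j - b j) → ZMod 2)) := by
    refine Finset.card_le_card_of_injOn
      (fun k j i => if h : b j + i.val < m then k j ⟨b j + i.val, h⟩ else 0) (fun _ _ => by simp) ?_
    intro k hk k' hk' hkk
    simp only [Finset.coe_filter, Set.mem_ofPred_eq] at hk hk'
    by_contra hne
    have h1 := H1 _ (hxDual_sub A hk.1 hk'.1) (sub_ne_zero.2 hne)
    have h2 : ∑ j, hxa ((k - k') j) ≤ ∑ j, b j := by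
      refine Finset.sum_le_sum fun j _ => ?_
      rw [hxa_le_iff]
      intro i hi
      by_contra hlt
      apply hi
      by_cases hiM : i.val < M j
      · have := congrFun (congrFun hkk j) ⟨i.val - b j, by omega⟩
        have e : b j + (i.val - b j) = i.val := by omega
        simp only [e, i.2, dif_pos] at this
        simp only [Pi.sub_apply]
        exact sub_eq_zero.2 this
      · have z1 : k j i = 0 := by
          by_contra hz
          have := (hxa_le_iff _ _).1 (hk.2 j) i hz
          omega
        have z2 : k' j i = 0 := by
          by_contra hz
          have := (hxa_le_iff _ _).1 (hk'.2 j) i hz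
          omega
        simp [z1, z2]
    omega
  have hc2 : #(Finset.univ : Finset ((j : Fin s) → Fin (M j - b j) → ZMod 2))
      = 2 ^ (∑ j, (M j - b j)) := by
    simp [Finset.prod_pow_eq_pow_sum, ZMod.card]
  rw [hc2] at hcard
  have e : ∑ j, (M j - b j) + m = ∑ j, M j + t := by
    have : ∑ j, (M j - b j) + ∑ j, b j = ∑ j, M j := by
      rw [← Finset.sum_add_distrib]
      exact Finset.sum_congr rfl fun j _ => by have := hb j; omega
    omega
  rw [← e, pow_add]
  exact Nat.mul_le_mul_right _ hcard

lemma hx_geo (r b N : ℕ) :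
    ∑ a ∈ Finset.range N, (if b ≤ a + r then (1 / 2 : ℝ) ^ (a + r) else 0) ≤ 2 * (1 / 2) ^ b := by
  have key : ∑ a ∈ Finset.range N, (if b ≤ a + r then (1 / 2 : ℝ) ^ (a + r) else 0)
      ≤ 2 * (1 / 2) ^ b - (if b ≤ N + r then 2 * (1 / 2 : ℝ) ^ (N + r) else 0) := by
    induction N with
    | zero =>
      simp only [Finset.range_zero, Finset.sum_empty, zero_add]
      split_ifs with h
      · have := pow_le_pow_of_le_one (by norm_num : (0 : ℝ) ≤ 1 / 2) (by norm_num) h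
        linarith
      · have : (0 : ℝ) < (1 / 2) ^ b := by positivity
        linarith
    | succ N ih =>
      rw [Finset.sum_range_succ]
      have e : (1 / 2 : ℝ) ^ (N + 1 + r) = (1 / 2) * (1 / 2) ^ (N + r) := by
        rw [show N + 1 + r = (N + r) + 1 by ring, pow_succ]; ring
      rcases lt_trichotomy b (N + r + 1) with h | h | h
      · rw [if_pos (by omega)] at ih ⊢
        rw [if_pos (by omega), e]
        linarith
      · rw [if_neg (by omega)] at ih ⊢
        rw [if_pos (by omega), h, show N + 1 + r = N + r + 1 by ring]
        rw [h] at ih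
        have z : ∑ a ∈ Finset.range N, (if b ≤ a + r then (1 / 2 : ℝ) ^ (a + r) else 0) = 0 := by
          refine Finset.sum_eq_zero fun a ha => if_neg ?_
          have := Finset.mem_range.1 ha
          omega
        rw [h] at z
        linarith
      · rw [if_neg (by omega)] at ih ⊢
        rw [if_neg (by omega)]
        linarith
  refine key.trans ?_
  have : 0 ≤ (if b ≤ N + r then 2 * (1 / 2 : ℝ) ^ (N + r) else 0) := by
    split_ifs <;> positivity
  linarith

lemma hx_box (s m b : ℕ) :
    ∑ M : Fin (s + 1) → Fin (m + 1), (if b ≤ hxT M then (1 / 2 : ℝ) ^ hxT M else 0)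
      ≤ (m + 1) ^ s * (2 * (1 / 2) ^ b) := by
  rw [← (Fin.consEquiv (fun _ : Fin (s + 1) => Fin (m + 1))).sum_comp, Fintype.sum_prod_type,
    Finset.sum_comm]
  refine (Finset.sum_le_sum (g := fun _ => 2 * (1 / 2 : ℝ) ^ b) fun M _ => ?_).trans ?_
  · have : ∀ a, hxT ((Fin.consEquiv (fun _ : Fin (s + 1) => Fin (m + 1))) (a, M))
      = a.val + hxT M := by
      intro a
      simp [hxT, Fin.consEquiv, Fin.sum_univ_succ]
    simp only [this]
    have := hx_geo (hxT M) b (m + 1)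
    rw [Finset.sum_range] at this
    exact this
  · simp

lemma hx_fiber' {s m : ℕ} (k : Fin s → Fin m → ZMod 2) (M : Fin s → Fin (m + 1)) :
    #{l : Fin s → Fin m → ZMod 2 | (∀ j, hxRel (k j) (l j)) ∧ hxMx k l = M} ≤ 2 ^ s := by
  refine le_trans (Finset.card_le_card ?_) (hx_fiber k M)
  intro l hl
  simp only [Finset.mem_filter, Finset.mem_univ, true_and] at hl ⊢
  refine ⟨fun j => hxRel_symm (hl.1 j), ?_⟩
  rw [← hl.2]
  funext j
  simp [hxMx, max_comm]

lemma hx_sum_e {s m : ℕ} (p : ℕ) (hp : p ≠ 0) (k : Fin s → Fin m → ZMod 2) :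
    ∑ l, hxe k l ^ p ≤ ∑ M : Fin s → Fin (m + 1),
      if (∀ j, hxa (k j) ≤ (M j).val) then 2 ^ s * ((1 / 2 : ℝ) ^ hxT M) ^ p else 0 := by
  have h1 : ∑ l, hxe k l ^ p =
      ∑ l with (∀ j, hxRel (k j) (l j)), ((1 / 2 : ℝ) ^ hxT (hxMx k l)) ^ p := by
    rw [Finset.sum_filter]
    refine Finset.sum_congr rfl fun l _ => ?_
    unfold hxe
    split_ifs
    · rfl
    · simp [hp]
  rw [h1, ← Finset.sum_fiberwise_of_maps_to (g := fun l => hxMx k l) (t := Finset.univ)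
    (fun _ _ => by simp)]
  refine Finset.sum_le_sum fun M _ => ?_
  rw [Finset.filter_filter]
  split_ifs with h
  · have hf := hx_fiber' k M
    rw [Finset.sum_congr rfl (g := fun _ => ((1 / 2 : ℝ) ^ hxT M) ^ p)
      (fun l hl => by rw [(Finset.mem_filter.1 hl).2.2])]
    rw [Finset.sum_const, nsmul_eq_mul]
    gcongr
    exact_mod_cast hf
  · apply le_of_eq
    apply Finset.sum_eq_zero
    intro l hl
    exfalso
    apply h
    intro j
    rw [← (Finset.mem_filter.1 hl).2.2]
    exact le_max_left _ _

lemma hx_sum_e2 {s m t : ℕ} (p : ℕ) (hp : p ≠ 0)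
    (A : Fin s → Matrix (Fin m) (Fin m) (ZMod 2)) (htm : t ≤ m)
    (H1 : ∀ k ∈ hxDual A, k ≠ 0 → m < ∑ j, hxa (k j) + t) :
    ∑ k ∈ (hxDual A).erase 0, ∑ l, hxe k l ^ p ≤ ∑ M : Fin s → Fin (m + 1),
      if m - t ≤ hxT M then 2 ^ s * 2 ^ t * (1 / 2) ^ m * (2 ^ hxT M * ((1 / 2 : ℝ) ^ hxT M) ^ p)
        else 0 := by
  refine (Finset.sum_le_sum fun k _ => hx_sum_e p hp k).trans ?_
  rw [Finset.sum_comm]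
  refine Finset.sum_le_sum fun M _ => ?_
  rw [← Finset.sum_filter, Finset.sum_const, nsmul_eq_mul]
  split_ifs with h
  · have hc := hx_count A htm H1 (fun j => (M j).val) (by unfold hxT at h; omega)
    have hc2 : #{k ∈ (hxDual A).erase 0 | ∀ j, hxa (k j) ≤ (M j).val}
        ≤ #{k ∈ hxDual A | ∀ j, hxa (k j) ≤ (M j).val} :=
      Finset.card_le_card (Finset.filter_subset_filter _ (Finset.erase_subset _ _))
    have hc3 : #{k ∈ (hxDual A).erase 0 | ∀ j, hxa (k j) ≤ (M j).val} * 2 ^ m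
        ≤ 2 ^ (hxT M + t) := (Nat.mul_le_mul_right _ hc2).trans hc
    have hc4 : (#{k ∈ (hxDual A).erase 0 | ∀ j, hxa (k j) ≤ (M j).val} : ℝ)
        ≤ 2 ^ hxT M * 2 ^ t * (1 / 2) ^ m := by
      rw [one_div, inv_pow, ← div_eq_mul_inv, le_div_iff₀ (by positivity), ← pow_add]
      exact_mod_cast hc3
    calc _ ≤ (2 ^ hxT M * 2 ^ t * (1 / 2) ^ m) * (2 ^ s * ((1 / 2 : ℝ) ^ hxT M) ^ p) := by gcongr
      _ = _ := by ring
  · rw [Finset.filter_eq_empty_iff.2]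
    · simp
    · intro k hk hall
      have h1 := H1 k (Finset.mem_of_mem_erase hk) (Finset.ne_of_mem_erase hk)
      have h2 : ∑ j, hxa (k j) ≤ hxT M := Finset.sum_le_sum fun j _ => hall j
      omega

lemma hx_S {s m t : ℕ} (A : Fin (s + 1) → Matrix (Fin m) (Fin m) (ZMod 2)) (htm : t ≤ m)
    (H1 : ∀ k ∈ hxDual A, k ≠ 0 → m < ∑ j, hxa (k j) + t)
    (H2 : ∀ k ∈ hxDual A, ∀ k' ∈ hxDual A, k ≠ k' → ∀ l : Fin (s + 1) → Fin m → ZMod 2,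
      (∀ j, hxRel (k j) (l j)) → (∀ j, hxRel (k' j) (l j)) →
      3 * m ≤ hxT (hxMx k l) + hxT (hxMx k' l) + t) :
    ∑ l, (∑ k ∈ (hxDual A).erase 0, hxe k l) ^ 2 ≤
      2 ^ (s + 1) * 2 ^ t * (1 / 2) ^ m * ((m + 1) ^ s * (2 * (1 / 2) ^ (m - t)))
      + 2 * ((2 ^ (s + 1) * (m + 1) ^ (s + 1)) * (1 / 2) ^ ((3 * m - t) / 2)) *
        (2 ^ (s + 1) * 2 ^ t * (1 / 2) ^ m * (m + 1) ^ (s + 1)) := by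
  set P := (hxDual A).erase 0 with hP
  set R := (3 * m - t) / 2 with hR
  have hd : ∑ k ∈ P, ∑ l, hxe k l ^ 2 ≤
      2 ^ (s + 1) * 2 ^ t * (1 / 2) ^ m * ((m + 1) ^ s * (2 * (1 / 2) ^ (m - t))) := by
    refine (hx_sum_e2 2 (by norm_num) A htm H1).trans ?_
    refine le_trans (le_of_eq ?_) (mul_le_mul_of_nonneg_left (hx_box s m (m - t)) (by positivity))
    rw [Finset.mul_sum]
    refine Finset.sum_congr rfl fun M _ => ?_
    split_ifs
    · rw [sq, ← mul_assoc (2 ^ hxT M), ← mul_pow]; norm_num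
    · simp
  have ho : ∑ k ∈ P, ∑ l, hxe k l ≤ 2 ^ (s + 1) * 2 ^ t * (1 / 2) ^ m * (m + 1) ^ (s + 1) := by
    have := hx_sum_e2 1 (by norm_num) A htm H1
    simp only [pow_one] at this
    refine this.trans ?_
    refine (Finset.sum_le_sum (g := fun _ => 2 ^ (s + 1) * 2 ^ t * (1 / 2) ^ m) fun M _ => ?_).trans ?_
    · split_ifs
      · rw [← mul_pow]; norm_num
      · positivity
    · simp; apply le_of_eq; ring
  have hin : ∀ l : Fin (s + 1) → Fin m → ZMod 2,
      ∑ k ∈ P, (if R ≤ hxT (hxMx k l) then hxe k l else 0)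
      ≤ (2 ^ (s + 1) * (m + 1) ^ (s + 1)) * (1 / 2) ^ R := by
    intro l
    have hle : ∀ k ∈ P, (if R ≤ hxT (hxMx k l) then hxe k l else 0) ≤
        (if ∀ j, hxRel (k j) (l j) then (1 / 2 : ℝ) ^ R else 0) := by
      intro k _
      unfold hxe
      split_ifs with h1 h2 h3
      · exact pow_le_pow_of_le_one (by norm_num) (by norm_num) h1
      · exact le_rfl
      · positivity
      · exact le_rfl
    refine (Finset.sum_le_sum hle).trans ?_
    rw [← Finset.sum_filter, Finset.sum_const, nsmul_eq_mul]
    have : #{k ∈ P | ∀ j, hxRel (k j) (l j)} ≤ 2 ^ (s + 1) * (m + 1) ^ (s + 1) :=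
      le_trans (Finset.card_le_card (Finset.filter_subset_filter _ (Finset.subset_univ _))) (hx_nbrs l)
    gcongr
    exact_mod_cast this
  have hsq : ∀ l : Fin (s + 1) → Fin m → ZMod 2, (∑ k ∈ P, hxe k l) ^ 2 ≤
      ∑ k ∈ P, hxe k l ^ 2 + 2 * ((∑ k ∈ P, hxe k l) *
        (∑ k ∈ P, (if R ≤ hxT (hxMx k l) then hxe k l else 0))) := by
    intro l
    have key : ∀ k ∈ P, ∀ k' ∈ P, hxe k l * hxe k' l ≤ (if k = k' then hxe k l ^ 2 else 0)
        + hxe k l * (if R ≤ hxT (hxMx k' l) then hxe k' l else 0)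
        + (if R ≤ hxT (hxMx k l) then hxe k l else 0) * hxe k' l := by
      intro k hk k' hk'
      have n1 := hxe_nonneg k l
      have n2 := hxe_nonneg k' l
      have n3 : 0 ≤ hxe k l * (if R ≤ hxT (hxMx k' l) then hxe k' l else 0) :=
        mul_nonneg n1 (by split_ifs <;> simp [n2])
      have n4 : 0 ≤ (if R ≤ hxT (hxMx k l) then hxe k l else 0) * hxe k' l :=
        mul_nonneg (by split_ifs <;> simp [n1]) n2
      by_cases hkk : k = k'
      · subst hkk
        rw [if_pos rfl]
        nlinarith
      · rw [if_neg hkk, zero_add]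
        by_cases r1 : ∀ j, hxRel (k j) (l j)
        · by_cases r2 : ∀ j, hxRel (k' j) (l j)
          · have := H2 k (Finset.mem_of_mem_erase hk) k' (Finset.mem_of_mem_erase hk') hkk l r1 r2
            by_cases c : R ≤ hxT (hxMx k l)
            · rw [if_pos c] at n4 ⊢
              linarith
            · have c' : R ≤ hxT (hxMx k' l) := by omega
              rw [if_pos c'] at n3 ⊢
              linarith
          · have : hxe k' l = 0 := by unfold hxe; rw [if_neg r2]
            rw [this, mul_zero]; rw [this] at n3 n4; linarith
        · have : hxe k l = 0 := by unfold hxe; rw [if_neg r1]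
          rw [this, zero_mul]; rw [this] at n3 n4; linarith
    rw [sq, Finset.sum_mul_sum]
    refine (Finset.sum_le_sum fun k hk => Finset.sum_le_sum fun k' hk' => key k hk k' hk').trans ?_
    simp only [Finset.sum_add_distrib]
    rw [← Finset.sum_mul_sum, ← Finset.sum_mul_sum]
    have : ∑ k ∈ P, ∑ k' ∈ P, (if k = k' then hxe k l ^ 2 else 0) = ∑ k ∈ P, hxe k l ^ 2 := by
      refine Finset.sum_congr rfl fun k hk => ?_
      rw [Finset.sum_ite_eq, if_pos hk]
    rw [this]
    apply le_of_eq; ring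
  calc _ ≤ ∑ l, (∑ k ∈ P, hxe k l ^ 2 + 2 * ((∑ k ∈ P, hxe k l) *
        ((2 ^ (s + 1) * (m + 1) ^ (s + 1)) * (1 / 2) ^ R))) := by
        refine Finset.sum_le_sum fun l _ => (hsq l).trans ?_
        have := mul_le_mul_of_nonneg_left (hin l)
          (Finset.sum_nonneg fun k _ => hxe_nonneg k l : 0 ≤ ∑ k ∈ P, hxe k l)
        linarith
    _ = ∑ k ∈ P, ∑ l, hxe k l ^ 2 +
        2 * ((2 ^ (s + 1) * (m + 1) ^ (s + 1)) * (1 / 2) ^ R) * ∑ k ∈ P, ∑ l, hxe k l := by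
        rw [Finset.sum_add_distrib, Finset.sum_comm, Finset.sum_comm (s := P) (f := fun k l => hxe k l),
          ← Finset.mul_sum, ← Finset.sum_mul]
        ring
    _ ≤ _ := by
        refine add_le_add hd (mul_le_mul_of_nonneg_left ho (by positivity))

lemma hx_Dd_bound {s m t : ℕ} (A : Fin (s + 1) → Matrix (Fin m) (Fin m) (ZMod 2)) (htm : t ≤ m)
    (H1 : ∀ k ∈ hxDual A, k ≠ 0 → m < ∑ j, hxa (k j) + t)
    (H2 : ∀ k ∈ hxDual A, ∀ k' ∈ hxDual A, k ≠ k' → ∀ l : Fin (s + 1) → Fin m → ZMod 2,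
      (∀ j, hxRel (k j) (l j)) → (∀ j, hxRel (k' j) (l j)) →
      3 * m ≤ hxT (hxMx k l) + hxT (hxMx k' l) + t) :
    (∑ q, hxDd A q ^ 2) / (2 ^ m) ^ (s + 1) ≤ (2 ^ (s + 1)) ^ 2 *
      (2 ^ (s + 1) * 2 ^ t * (1 / 2) ^ m * ((m + 1) ^ s * (2 * (1 / 2) ^ (m - t)))
      + 2 * ((2 ^ (s + 1) * (m + 1) ^ (s + 1)) * (1 / 2) ^ ((3 * m - t) / 2)) *
        (2 ^ (s + 1) * 2 ^ t * (1 / 2) ^ m * (m + 1) ^ (s + 1))) := by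
  rw [hxDd_sq]
  refine le_trans ?_ (mul_le_mul_of_nonneg_left (hx_S A htm H1 H2) (by positivity))
  rw [Finset.mul_sum]
  refine Finset.sum_le_sum fun l _ => ?_
  rw [← mul_pow, ← sq_abs]
  refine pow_le_pow_left₀ (abs_nonneg _) ?_ 2
  refine (Finset.abs_sum_le_sum_abs _ _).trans ?_
  rw [Finset.mul_sum]
  exact Finset.sum_le_sum fun k _ => hxe_bound k l

lemma hx_cellcount {s m t : ℕ} (A : Fin s → Matrix (Fin m) (Fin m) (ZMod 2)) (htm : t ≤ m)
    (H1 : ∀ k ∈ hxDual A, k ≠ 0 → m < ∑ j, hxa (k j) + t) (j : Fin s) (q : Fin m → ZMod 2) :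
    ∑ h, (if hxPt A h j = q then (1 : ℝ) else 0) ≤ 2 ^ t := by
  have hc := hx_count A htm H1 (Pi.single j m) (by simp)
  simp only [Finset.sum_pi_single', Finset.mem_univ, if_true] at hc
  have hc' : #{k ∈ hxDual A | ∀ i, hxa (k i) ≤ (Pi.single j m : Fin s → ℕ) i} ≤ 2 ^ t := by
    rw [pow_add, mul_comm] at hc
    exact Nat.le_of_mul_le_mul_left hc (by positivity)
  have e1 : ∀ h, (if hxPt A h j = q then (1 : ℝ) else 0)
      = (∑ κ, hxCh κ (hxPt A h j) * hxCh κ q) / 2 ^ m := by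
    intro h
    rw [hxCh_orth]
    split_ifs <;> simp
  have e2 : ∀ κ : Fin m → ZMod 2, ∀ h, hxCh κ (hxPt A h j) = hxChV (Pi.single j κ) (hxPt A h) := by
    intro κ h
    rw [hxChV, Finset.prod_eq_single j]
    · simp
    · intro i _ hi
      rw [Pi.single_eq_of_ne hi, hxCh_zero]
    · simp
  simp_rw [e1]
  rw [← Finset.sum_div, Finset.sum_comm]
  simp_rw [e2, ← Finset.sum_mul, hx_duality]
  rw [div_le_iff₀ (by positivity)]
  have : ∀ κ : Fin m → ZMod 2,
      (if (Pi.single j κ : Fin s → Fin m → ZMod 2) ∈ hxDual A then (2 : ℝ) ^ m else 0) * hxCh κ q ≤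
      if (Pi.single j κ : Fin s → Fin m → ZMod 2) ∈ hxDual A then (2 : ℝ) ^ m else 0 := by
    intro κ
    have h1 : hxCh κ q ≤ 1 := (le_abs_self _).trans (hxCh_abs κ q).le
    refine mul_le_of_le_one_right ?_ h1
    split_ifs <;> positivity
  refine (Finset.sum_le_sum fun κ _ => this κ).trans ?_
  rw [← Finset.sum_filter, Finset.sum_const, nsmul_eq_mul]
  gcongr
  have hle : #{κ : Fin m → ZMod 2 | (Pi.single j κ : Fin s → Fin m → ZMod 2) ∈ hxDual A} ≤
      #{k ∈ hxDual A | ∀ i, hxa (k i) ≤ (Pi.single j m : Fin s → ℕ) i} := by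
    refine Finset.card_le_card_of_injOn (fun κ => Pi.single j κ) ?_ ?_
    · intro κ hκ
      simp only [Finset.coe_filter, Finset.mem_univ, true_and, Set.mem_ofPred_eq] at hκ ⊢
      refine ⟨hκ, fun i => ?_⟩
      by_cases hi : i = j
      · subst hi; simp [hxa_le]
      · simp [hi, hxa_zero]
    · intro κ _ κ' _ h
      exact Pi.single_injective j h
  exact_mod_cast hle.trans hc'

lemma hx_dick_le_sum (K : ℕ) :
    dickWeight 2 3 K ≤ ∑ i ∈ (Finset.range K).filter (fun i => ndigit 2 K i ≠ 0), (i + 1) := by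
  have h1 : ((nzPos 2 K).map (· + 1)).sum
      = ∑ i ∈ (Finset.range K).filter (fun i => ndigit 2 K i ≠ 0), (i + 1) := by
    unfold nzPos
    rw [List.map_reverse, List.sum_reverse, ← Finset.sum_map_toList]
    exact ((Finset.sort_perm_toList _ _).map _).sum_eq
  rw [← h1]
  unfold dickWeight
  conv_rhs => rw [← List.take_append_drop 3 (nzPos 2 K), List.map_append, List.sum_append]
  omega

lemma hx_dick_le_mul (K A : ℕ) (h : ∀ i, ndigit 2 K i ≠ 0 → i + 1 ≤ A) :
    dickWeight 2 3 K ≤ 3 * A := by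
  unfold dickWeight
  refine (List.sum_le_card_nsmul _ A ?_).trans ?_
  · intro x hx
    rw [List.mem_map] at hx
    obtain ⟨i, hi, rfl⟩ := hx
    have := List.mem_of_mem_take hi
    unfold nzPos at this
    simp only [List.mem_reverse, Finset.mem_sort, Finset.mem_filter] at this
    exact h i this.2
  · simp only [List.length_map, List.length_take, smul_eq_mul]
    exact Nat.mul_le_mul_right _ (min_le_left _ _)

lemma hx_toNat {m : ℕ} (κ : Fin m → ZMod 2) :
    ∃ K : ℕ, K < 2 ^ m ∧ ∀ i, ndigit 2 K i = if h : i < m then (κ ⟨i, h⟩).val else 0 := by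
  induction m with
  | zero => exact ⟨0, by simp, by simp [ndigit]⟩
  | succ m ih =>
    obtain ⟨K, hK, hd⟩ := ih (Fin.tail κ)
    have hv : (κ 0).val < 2 := ZMod.val_lt _
    refine ⟨(κ 0).val + 2 * K, by rw [pow_succ]; omega, ?_⟩
    intro i
    cases i with
    | zero =>
      simp only [ndigit, pow_zero, Nat.div_one, Nat.succ_pos, dif_pos]
      have : (κ ⟨0, Nat.succ_pos m⟩) = κ 0 := rfl
      rw [this]
      omega
    | succ i =>
      have h2 : ndigit 2 ((κ 0).val + 2 * K) (i + 1) = ndigit 2 K i := by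
        unfold ndigit
        rw [pow_succ', ← Nat.div_div_eq_div_mul]
        congr 2
        omega
      rw [h2, hd]
      by_cases h : i < m
      · rw [dif_pos h, dif_pos (by omega)]; rfl
      · rw [dif_neg h, dif_neg (by omega)]

lemma hx_sum_range {m : ℕ} (g : (Fin m → ZMod 2) → ℝ) :
    ∑ h ∈ Finset.range (2 ^ m), g (digitVec 2 m h) = ∑ v, g v := by
  have hs : Set.SurjOn (digitVec 2 m) (Finset.range (2 ^ m) : Finset ℕ)
      ((Finset.univ : Finset (Fin m → ZMod 2)) : Set (Fin m → ZMod 2)) := by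
    intro v _
    obtain ⟨K, hK, hd⟩ := hx_toNat v
    refine ⟨K, by simpa using hK, ?_⟩
    funext i
    simp [digitVec, hd]
  have hi := Finset.injOn_of_surjOn_of_card_le (digitVec 2 m) (s := Finset.range (2 ^ m))
    (t := Finset.univ) (fun _ _ => by simp) hs (by simp [ZMod.card])
  exact Finset.sum_nbij (digitVec 2 m) (fun _ _ => by simp) hi hs (fun _ _ => rfl)

def hxA {s m d : ℕ} (C : Fin s → Matrix (Fin (m + d)) (Fin m) (ZMod 2)) :
    Fin s → Matrix (Fin m) (Fin m) (ZMod 2) := fun j => Matrix.of fun i r => C j (Fin.castAdd d i) r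

lemma hx_weight {s m d t : ℕ} (C : Fin s → Matrix (Fin (m + d)) (Fin m) (ZMod 2))
    (H : (3 * m : ℤ) - t + 1 ≤ minWeight 2 3 C) (k : Fin s → Fin m → ZMod 2)
    (hk : k ∈ hxDual (hxA C)) (hk0 : k ≠ 0) :
    3 * m + 1 ≤ 3 * ∑ j, hxa (k j) + t ∧
    3 * m + 1 ≤ ∑ j, ∑ i with k j i ≠ 0, (i.val + 1) + t := by
  choose K hKlt hK using fun j => hx_toNat (k j)
  have hmem : K ∈ dualNet 2 C := by
    simp only [hxDual, Finset.mem_filter, Finset.mem_univ, true_and] at hk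
    simp only [dualNet, Set.mem_ofPred_eq]
    rw [← hk]
    refine Finset.sum_congr rfl fun j _ => ?_
    funext r
    simp only [mulVec, dotProduct, Fin.sum_univ_add, transpose_apply, hxA, of_apply]
    rw [Finset.sum_eq_zero (s := (Finset.univ : Finset (Fin d))), add_zero]
    · refine Finset.sum_congr rfl fun i _ => ?_
      simp [digitVec, hK]
    · intro i _
      simp [digitVec, hK]
  have hK0 : K ≠ 0 := by
    intro h0
    apply hk0
    funext j i
    have h1 := hK j i.val
    rw [h0] at h1
    simp only [i.2, dif_pos, Pi.zero_apply] at h1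
    have h2 : ndigit 2 0 i.val = 0 := by simp [ndigit]
    rw [h2] at h1
    exact (ZMod.val_eq_zero _).1 h1.symm
  have hmin : minWeight 2 3 C ≤ dickWeightV 2 3 K := Nat.sInf_le ⟨K, ⟨hmem, hK0⟩, rfl⟩
  have hnz : ∀ j i, ndigit 2 (K j) i ≠ 0 → ∃ h : i < m, k j ⟨i, h⟩ ≠ 0 := by
    intro j i h
    rw [hK] at h
    by_cases hi : i < m
    · refine ⟨hi, ?_⟩
      rw [dif_pos hi] at h
      intro h0
      rw [h0] at h
      simp at h
    · simp [hi] at h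
  constructor
  · have : dickWeightV 2 3 K ≤ 3 * ∑ j, hxa (k j) := by
      unfold dickWeightV
      rw [Finset.mul_sum]
      refine Finset.sum_le_sum fun j _ => hx_dick_le_mul _ _ fun i hi => ?_
      obtain ⟨h, h'⟩ := hnz j i hi
      exact hxa_ge (k j) ⟨i, h⟩ h'
    omega
  · have : dickWeightV 2 3 K ≤ ∑ j, ∑ i with k j i ≠ 0, (i.val + 1) := by
      unfold dickWeightV
      refine Finset.sum_le_sum fun j _ => (hx_dick_le_sum _).trans ?_
      have e : ∑ i with k j i ≠ 0, (i.val + 1)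
          = ∑ i ∈ (univ.filter (fun i => k j i ≠ 0)).map Fin.valEmbedding, (i + 1) := by
        rw [Finset.sum_map]; rfl
      rw [e]
      refine Finset.sum_le_sum_of_subset fun i hi => ?_
      obtain ⟨h, h'⟩ := hnz j i (Finset.mem_filter.1 hi).2
      simp only [Finset.mem_map, Finset.mem_filter, Finset.mem_univ, true_and]
      exact ⟨⟨i, h⟩, h', rfl⟩
    omega

lemma hx_one {m : ℕ} (k l : Fin m → ZMod 2) (h : hxRel k l) :
    ∑ i with k i ≠ l i, (i.val + 1) ≤ max (hxa k) (hxa l) := by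
  by_cases hz : ∃ i, k i ≠ l i
  · obtain ⟨i, hi⟩ := hz
    have : (univ.filter fun i => k i ≠ l i) ⊆ {i} := by
      intro i' hi'
      have h1 := hx_diff h i hi
      have h2 := hx_diff h i' (Finset.mem_filter.1 hi').2
      simp only [Finset.mem_singleton]
      exact Fin.ext (by omega)
    refine (Finset.sum_le_sum_of_subset this).trans ?_
    rw [Finset.sum_singleton, hx_diff h i hi]
  · push Not at hz
    rw [Finset.sum_eq_zero]
    · simp
    · intro i hi
      exact absurd (hz i) (Finset.mem_filter.1 hi).2

lemma hx_H1 {s m d t : ℕ} (C : Fin s → Matrix (Fin (m + d)) (Fin m) (ZMod 2))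
    (H : (3 * m : ℤ) - t + 1 ≤ minWeight 2 3 C) :
    ∀ k ∈ hxDual (hxA C), k ≠ 0 → m < ∑ j, hxa (k j) + t := by
  intro k hk hk0
  have := (hx_weight C H k hk hk0).1
  omega

lemma hx_H2 {s m d t : ℕ} (C : Fin s → Matrix (Fin (m + d)) (Fin m) (ZMod 2))
    (H : (3 * m : ℤ) - t + 1 ≤ minWeight 2 3 C) :
    ∀ k ∈ hxDual (hxA C), ∀ k' ∈ hxDual (hxA C), k ≠ k' → ∀ l : Fin s → Fin m → ZMod 2,
      (∀ j, hxRel (k j) (l j)) → (∀ j, hxRel (k' j) (l j)) →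
      3 * m ≤ hxT (hxMx k l) + hxT (hxMx k' l) + t := by
  intro k hk k' hk' hne l r r'
  have h1 := (hx_weight C H (k - k') (hxDual_sub _ hk hk') (sub_ne_zero.2 hne)).2
  have h2 : ∑ j, ∑ i with (k - k') j i ≠ 0, (i.val + 1) ≤ hxT (hxMx k l) + hxT (hxMx k' l) := by
    unfold hxT
    rw [← Finset.sum_add_distrib]
    refine Finset.sum_le_sum fun j _ => ?_
    refine le_trans ?_ (add_le_add (hx_one (k j) (l j) (r j)) (hx_one (k' j) (l j) (r' j)))
    rw [Finset.sum_filter, Finset.sum_filter, Finset.sum_filter, ← Finset.sum_add_distrib]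
    refine Finset.sum_le_sum fun i _ => ?_
    by_cases a : k j i = l j i
    · by_cases b : k' j i = l j i
      · simp [a, b]
      · simp only [Pi.sub_apply, b, ne_eq, not_false_eq_true, if_true]
        split_ifs <;> omega
    · simp only [Pi.sub_apply, a, ne_eq, not_false_eq_true, if_true]
      split_ifs <;> omega
  omega

lemma hx_n {s m n t : ℕ} (hs : 0 < s) (C : Fin s → Matrix (Fin n) (Fin m) (ZMod 2))
    (H : (3 * m : ℤ) - t + 1 ≤ minWeight 2 3 C) : 3 * m ≤ n + t := by
  have hdig : ∀ i, ndigit 2 (2 ^ n) i ≠ 0 → i = n := by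
    intro i h
    unfold ndigit at h
    by_contra hne
    rcases lt_or_gt_of_ne hne with hlt | hgt
    · apply h
      obtain ⟨c, rfl⟩ := Nat.exists_eq_add_of_lt hlt
      rw [show i + c + 1 = i + (c + 1) by ring, pow_add, Nat.mul_div_cancel_left _ (by positivity),
        pow_succ]
      simp
    · apply h
      rw [Nat.div_eq_of_lt (Nat.pow_lt_pow_right (by norm_num) hgt)]
  have hdig0 : ∀ i < n, ndigit 2 (2 ^ n) i = 0 := by
    intro i hi
    by_contra h
    have := hdig i h
    omega
  set K : Fin s → ℕ := Pi.single ⟨0, hs⟩ (2 ^ n) with hKdef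
  have hmem : K ∈ dualNet 2 C := by
    simp only [dualNet, Set.mem_ofPred_eq]
    refine Finset.sum_eq_zero fun j _ => ?_
    have : digitVec 2 n (K j) = 0 := by
      funext i
      by_cases hj : j = ⟨0, hs⟩
      · subst hj; simp [digitVec, hKdef, hdig0]
      · simp [digitVec, hKdef, hj, ndigit]
    rw [this, mulVec_zero]
  have hK0 : K ≠ 0 := by
    intro h0
    have := congrFun h0 ⟨0, hs⟩
    simp [hKdef] at this
  have hmin : minWeight 2 3 C ≤ dickWeightV 2 3 K := Nat.sInf_le ⟨K, ⟨hmem, hK0⟩, rfl⟩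
  have : dickWeightV 2 3 K ≤ n + 1 := by
    unfold dickWeightV
    rw [Finset.sum_eq_single ⟨0, hs⟩]
    · simp only [hKdef, Pi.single_eq_same]
      refine (hx_dick_le_sum _).trans ?_
      have : ((Finset.range (2 ^ n)).filter fun i => ndigit 2 (2 ^ n) i ≠ 0) ⊆ {n} := by
        intro i hi
        simpa using hdig i (Finset.mem_filter.1 hi).2
      refine (Finset.sum_le_sum_of_subset this).trans ?_
      simp
    · intro j _ hj
      simp only [hKdef, Pi.single_eq_of_ne hj]
      have := hx_dick_le_sum 0
      simpa using this
    · simp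
  omega

lemma hx_prod_diff {ι : Type*} (S : Finset ι) (a b : ι → ℝ) (ha : ∀ i, 0 ≤ a i ∧ a i ≤ 1)
    (hb : ∀ i, 0 ≤ b i ∧ b i ≤ 1) :
    |∏ i ∈ S, a i - ∏ i ∈ S, b i| ≤ ∑ i ∈ S, |a i - b i| := by
  classical
  induction S using Finset.induction_on with
  | empty => simp
  | insert i S hi ih =>
    rw [Finset.prod_insert hi, Finset.prod_insert hi, Finset.sum_insert hi]
    have e : a i * ∏ i ∈ S, a i - b i * ∏ i ∈ S, b i
        = (a i - b i) * ∏ i ∈ S, a i + b i * (∏ i ∈ S, a i - ∏ i ∈ S, b i) := by ring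
    rw [e]
    refine (abs_add_le _ _).trans (add_le_add ?_ ?_)
    · rw [abs_mul]
      refine mul_le_of_le_one_right (abs_nonneg _) ?_
      rw [abs_of_nonneg (Finset.prod_nonneg fun i _ => (ha i).1)]
      exact Finset.prod_le_one (fun i _ => (ha i).1) fun i _ => (ha i).2
    · rw [abs_mul, abs_of_nonneg (hb i).1]
      exact (mul_le_of_le_one_left (abs_nonneg _) (hb i).2).trans ih

lemma hx_ind {m : ℕ} (x q : Fin m → ZMod 2) (p y : ℝ) (hp : hxU x ≤ p ∧ p < hxU x + 1 / 2 ^ m)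
    (hy : hxU q ≤ y ∧ y < hxU q + 1 / 2 ^ m) :
    |(if p < y then (1 : ℝ) else 0) - hxL x q| ≤ if x = q then 1 else 0 := by
  have hpos : (0 : ℝ) < 1 / 2 ^ m := by positivity
  by_cases hxq : x = q
  · rw [if_pos hxq]
    unfold hxL
    split_ifs <;> simp
  · rw [if_neg hxq]
    unfold hxL
    rcases hxU_tri x q with h | h | h
    · rw [if_pos (by linarith), if_pos (by linarith)]; simp
    · exact absurd h hxq
    · rw [if_neg (by linarith), if_neg (by linarith)]; simp

lemma hx_netPoint {s m d : ℕ} (C : Fin s → Matrix (Fin (m + d)) (Fin m) (ZMod 2)) (h : ℕ)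
    (j : Fin s) :
    hxU (hxPt (hxA C) (digitVec 2 m h) j) ≤ netPoint 2 C h j ∧
    netPoint 2 C h j < hxU (hxPt (hxA C) (digitVec 2 m h) j) + 1 / 2 ^ m := by
  have e : netPoint 2 C h j = hxU (hxPt (hxA C) (digitVec 2 m h) j)
      + hxU (fun i : Fin d => (C j).mulVec (digitVec 2 m h) (Fin.natAdd m i)) / 2 ^ m := by
    unfold netPoint
    rw [Fin.sum_univ_add]
    congr 1
    unfold hxU
    rw [Finset.sum_div]
    refine Finset.sum_congr rfl fun i _ => ?_
    simp only [Fin.val_natAdd, Nat.cast_ofNat]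
    rw [div_div, ← pow_add]
    congr 2
    ring
  rw [e]
  have h1 := hxU_nonneg (fun i : Fin d => (C j).mulVec (digitVec 2 m h) (Fin.natAdd m i))
  have h2 := hxU_lt (fun i : Fin d => (C j).mulVec (digitVec 2 m h) (Fin.natAdd m i))
  constructor
  · have := div_nonneg h1 (by positivity : (0 : ℝ) ≤ 2 ^ m)
    linarith
  · have := div_lt_div_of_pos_right h2 (by positivity : (0 : ℝ) < 2 ^ m)
    linarith

open Classical in
noncomputable def hxLoc {s : ℕ} (N : ℕ) (pts : ℕ → (Fin s → ℝ)) (y : Fin s → ℝ) : ℝ :=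
  (∑ h ∈ Finset.range N, if ∀ j, 0 ≤ pts h j ∧ pts h j < y j then (1 : ℝ) else 0) / N
      - ∏ j, y j

lemma hx_sqL2_eq {s : ℕ} (N : ℕ) (pts : ℕ → (Fin s → ℝ)) :
    sqL2 N pts = ∫ y in cube s, hxLoc N pts y ^ 2 := rfl

lemma hx_pointwise {s m d t : ℕ} (C : Fin s → Matrix (Fin (m + d)) (Fin m) (ZMod 2)) (htm : t ≤ m)
    (H : (3 * m : ℤ) - t + 1 ≤ minWeight 2 3 C) (y : Fin s → ℝ) (q : Fin s → Fin m → ZMod 2)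
    (hy : ∀ j, hxU (q j) ≤ y j ∧ y j < hxU (q j) + 1 / 2 ^ m) :
    |hxLoc (2 ^ m) (netPoint 2 C) y - hxDd (hxA C) q| ≤ s * (2 ^ t + 1) / 2 ^ m := by
  classical
  have hpos : (0 : ℝ) < 2 ^ m := by positivity
  have h1 : |∑ h ∈ Finset.range (2 ^ m),
        (if ∀ j, 0 ≤ netPoint 2 C h j ∧ netPoint 2 C h j < y j then (1 : ℝ) else 0)
      - ∑ h, ∏ j, hxL (hxPt (hxA C) h j) (q j)| ≤ s * 2 ^ t := by
    rw [← hx_sum_range (fun v => ∏ j, hxL (hxPt (hxA C) v j) (q j)), ← Finset.sum_sub_distrib]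
    refine (Finset.abs_sum_le_sum_abs _ _).trans ?_
    have h2 : ∀ h ∈ Finset.range (2 ^ m),
        |(if ∀ j, 0 ≤ netPoint 2 C h j ∧ netPoint 2 C h j < y j then (1 : ℝ) else 0)
          - ∏ j, hxL (hxPt (hxA C) (digitVec 2 m h) j) (q j)|
        ≤ (fun v => ∑ j, if hxPt (hxA C) v j = q j then (1 : ℝ) else 0) (digitVec 2 m h) := by
      intro h _
      have e : (if ∀ j, 0 ≤ netPoint 2 C h j ∧ netPoint 2 C h j < y j then (1 : ℝ) else 0)
          = ∏ j, (if netPoint 2 C h j < y j then (1 : ℝ) else 0) := by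
        rw [Finset.prod_ite_zero]
        simp only [Finset.prod_const_one, Finset.mem_univ, true_implies]
        have : (∀ j, 0 ≤ netPoint 2 C h j ∧ netPoint 2 C h j < y j)
            ↔ ∀ j, netPoint 2 C h j < y j :=
          forall_congr' fun j => ⟨fun a => a.2, fun a =>
            ⟨(hxU_nonneg _).trans (hx_netPoint C h j).1, a⟩⟩
        simp only [this]
      rw [e]
      refine (hx_prod_diff _ _ _ ?_ ?_).trans ?_
      · intro j; split_ifs <;> simp
      · exact fun j => ⟨hxL_nonneg _ _, hxL_le _ _⟩
      · exact Finset.sum_le_sum fun j _ => hx_ind _ _ _ _ (hx_netPoint C h j) (hy j)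
    refine (Finset.sum_le_sum h2).trans ?_
    rw [hx_sum_range (fun v => ∑ j, if hxPt (hxA C) v j = q j then (1 : ℝ) else 0),
      Finset.sum_comm]
    refine (Finset.sum_le_sum fun j _ => hx_cellcount (hxA C) htm (hx_H1 C H) j (q j)).trans ?_
    simp
  have h3 : |∏ j, y j - ∏ j, ((∑ x, hxL x (q j)) / 2 ^ m)| ≤ s * (1 / 2 ^ m) := by
    refine (hx_prod_diff _ _ _ ?_ ?_).trans ?_
    · intro j
      have a := hxU_nonneg (q j)
      have b := hxU_le (q j)
      have c := hy j
      constructor <;> linarith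
    · intro j
      rw [hxL_avg]
      have a := hxU_nonneg (q j)
      have b := hxU_le (q j)
      have : (0 : ℝ) < 1 / 2 ^ m := by positivity
      constructor <;> linarith
    · refine (Finset.sum_le_sum (g := fun _ => (1 / 2 ^ m : ℝ)) fun j _ => ?_).trans ?_
      · rw [hxL_avg, abs_le]
        have c := hy j
        have : (0 : ℝ) < 1 / 2 ^ m := by positivity
        constructor <;> linarith
      · simp
  have e : hxLoc (2 ^ m) (netPoint 2 C) y - hxDd (hxA C) q
      = (∑ h ∈ Finset.range (2 ^ m),
        (if ∀ j, 0 ≤ netPoint 2 C h j ∧ netPoint 2 C h j < y j then (1 : ℝ) else 0)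
      - ∑ h, ∏ j, hxL (hxPt (hxA C) h j) (q j)) / 2 ^ m
      - (∏ j, y j - ∏ j, ((∑ x, hxL x (q j)) / 2 ^ m)) := by
    unfold hxLoc hxDd
    push_cast
    rw [sub_div]
    ring_nf
    try congr
  rw [e]
  refine (abs_sub _ _).trans ?_
  rw [abs_div, abs_of_pos hpos]
  have := div_le_div_of_nonneg_right h1 hpos.le
  have e2 : (s : ℝ) * (2 ^ t + 1) / 2 ^ m = s * 2 ^ t / 2 ^ m + s * (1 / 2 ^ m) := by ring
  rw [e2]
  exact add_le_add this h3

def hxCell {s m : ℕ} (q : Fin s → Fin m → ZMod 2) : Set (Fin s → ℝ) :=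
  Set.univ.pi fun j => Set.Ico (hxU (q j)) (hxU (q j) + 1 / 2 ^ m)

lemma hx_cell_vol {s m : ℕ} (q : Fin s → Fin m → ZMod 2) :
    volume (hxCell q) = ENNReal.ofReal ((1 / 2 ^ m) ^ s) := by
  unfold hxCell
  rw [volume_pi, Measure.pi_pi]
  simp only [Real.volume_Ico, add_sub_cancel_left, Finset.prod_const, Finset.card_univ,
    Fintype.card_fin]
  rw [ENNReal.ofReal_pow (by positivity)]

lemma hx_integral {s m : ℕ} (f : (Fin s → ℝ) → ℝ) (G : (Fin s → Fin m → ZMod 2) → ℝ)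
    (hf : ∀ y, 0 ≤ f y) (hG : ∀ q, 0 ≤ G q) (hfG : ∀ q, ∀ y ∈ hxCell q, f y ≤ G q) :
    ∫ y in cube s, f y ≤ (∑ q, G q) / (2 ^ m) ^ s := by
  have hms : ∀ q : Fin s → Fin m → ZMod 2, MeasurableSet (hxCell q) := fun q =>
    MeasurableSet.univ_pi fun j => measurableSet_Ico
  have hae : (Set.univ.pi fun _ : Fin s => Set.Ico (0 : ℝ) 1) =ᵐ[volume] cube s := by
    have := Measure.univ_pi_Ico_ae_eq_Icc (μ := fun _ : Fin s => (volume : Measure ℝ))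
      (f := fun _ => (0 : ℝ)) (g := fun _ => (1 : ℝ))
    rw [← Set.pi_univ_Icc] at this
    exact this
  rw [← setIntegral_congr_set hae]
  set g : (Fin s → ℝ) → ℝ := fun y => ∑ q, (hxCell q).indicator (fun _ => G q) y with hg
  have hIntg : ∀ q ∈ (Finset.univ : Finset (Fin s → Fin m → ZMod 2)),
      Integrable ((hxCell q).indicator (fun _ => G q)) volume := fun q _ =>
    (integrable_indicator_iff (hms q)).2
      (integrableOn_const (by rw [hx_cell_vol]; exact ENNReal.ofReal_ne_top))
  have hgi : Integrable g volume := integrable_finsetSum _ hIntg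
  have hg0 : ∀ y, 0 ≤ g y := fun y => Finset.sum_nonneg fun q _ =>
    Set.indicator_nonneg (fun _ _ => hG q) y
  calc ∫ y in (Set.univ.pi fun _ : Fin s => Set.Ico (0 : ℝ) 1), f y
      ≤ ∫ y in (Set.univ.pi fun _ : Fin s => Set.Ico (0 : ℝ) 1), g y := by
        refine integral_mono_of_nonneg (Filter.Eventually.of_forall hf) hgi.integrableOn ?_
        refine (ae_restrict_iff' (MeasurableSet.univ_pi fun j => measurableSet_Ico)).2 ?_
        refine Filter.Eventually.of_forall fun y hy => ?_
        choose q hq using fun j => hxU_cell m (y j) (hy j trivial).1 (hy j trivial).2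
        have hmem : y ∈ hxCell q := fun j _ => hq j
        refine (hfG q y hmem).trans ?_
        refine le_trans ?_ (Finset.single_le_sum (f := fun q => (hxCell q).indicator (fun _ => G q) y)
          (fun q _ => Set.indicator_nonneg (fun _ _ => hG q) y) (Finset.mem_univ q))
        simp only [Set.indicator_of_mem hmem, le_refl]
    _ ≤ ∫ y, g y := setIntegral_le_integral hgi (Filter.Eventually.of_forall hg0)
    _ = (∑ q, G q) / (2 ^ m) ^ s := by
        rw [hg, integral_finsetSum _ hIntg, Finset.sum_div]
        refine Finset.sum_congr rfl fun q _ => ?_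
        rw [integral_indicator (hms q), setIntegral_const, measureReal_def, hx_cell_vol,
          ENNReal.toReal_ofReal (by positivity), smul_eq_mul, one_div, inv_pow]
        field_simp

lemma hx_sq_bound {s m d t : ℕ} (C : Fin s → Matrix (Fin (m + d)) (Fin m) (ZMod 2)) (htm : t ≤ m)
    (H : (3 * m : ℤ) - t + 1 ≤ minWeight 2 3 C) :
    sqL2 (2 ^ m) (netPoint 2 C) ≤ 2 * ((∑ q, hxDd (hxA C) q ^ 2) / (2 ^ m) ^ s)
      + 2 * (s * (2 ^ t + 1) / 2 ^ m) ^ 2 := by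
  rw [hx_sqL2_eq]
  refine (hx_integral (m := m) _ (fun q => 2 * hxDd (hxA C) q ^ 2
    + 2 * (s * (2 ^ t + 1) / 2 ^ m) ^ 2) (fun y => sq_nonneg _) (fun q => by positivity) ?_).trans ?_
  · intro q y hy
    have h := hx_pointwise C htm H y q (fun j => hy j trivial)
    have h2 := sq_le_sq' (by have := (abs_le.1 h).1; linarith) (abs_le.1 h).2
    nlinarith [sq_nonneg (hxLoc (2 ^ m) (netPoint 2 C) y - 2 * hxDd (hxA C) q)]
  · rw [Finset.sum_add_distrib, ← Finset.mul_sum, Finset.sum_const, Finset.card_univ]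
    simp only [Fintype.card_fun, Fintype.card_fin, ZMod.card, nsmul_eq_mul]
    push_cast
    apply le_of_eq
    field_simp

lemma hx_sq_triv {s : ℕ} (N : ℕ) (pts : ℕ → (Fin s → ℝ)) : sqL2 N pts ≤ 1 := by
  rw [hx_sqL2_eq]
  have hv : volume (cube s) = 1 := by
    unfold cube; rw [volume_pi, Measure.pi_pi]; simp
  have hm : MeasurableSet (cube s) := MeasurableSet.univ_pi fun j => measurableSet_Icc
  calc ∫ y in cube s, hxLoc N pts y ^ 2 ≤ ∫ y in cube s, (1 : ℝ) := by
        refine integral_mono_of_nonneg (Filter.Eventually.of_forall fun y => sq_nonneg _)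
          (integrableOn_const (by rw [hv]; simp)) ?_
        refine (ae_restrict_iff' hm).2 (Filter.Eventually.of_forall fun y hy => ?_)
        have h0 : 0 ≤ ∏ j, y j := Finset.prod_nonneg fun j _ => (hy j trivial).1
        have h1 : ∏ j, y j ≤ 1 :=
          Finset.prod_le_one (fun j _ => (hy j trivial).1) fun j _ => (hy j trivial).2
        simp only [hxLoc]
        set S : ℝ := _ / (N : ℝ) with hS
        have hS0 : 0 ≤ S := div_nonneg (Finset.sum_nonneg fun _ _ => by split_ifs <;> simp)
          (Nat.cast_nonneg _)
        have hS1 : S ≤ 1 := by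
          refine div_le_one_of_le₀ ?_ (Nat.cast_nonneg _)
          refine (Finset.sum_le_sum (g := fun _ => (1 : ℝ)) fun _ _ => ?_).trans (by simp)
          split_ifs <;> simp
        nlinarith
    _ = 1 := by rw [setIntegral_const, measureReal_def, hv]; simp

lemma hx_poly (p : ℕ) : ∃ K : ℝ, 0 < K ∧ ∀ m : ℕ, ((m : ℝ) + 1) ^ p ≤ K * 2 ^ m := by
  have h := tendsto_pow_const_mul_const_pow_of_abs_lt_one p
    (r := (1 / 2 : ℝ)) (by rw [abs_of_pos] <;> norm_num)
  obtain ⟨K, hK⟩ := h.bddAbove_range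
  refine ⟨2 * (|K| + 1), by positivity, fun m => ?_⟩
  have h1 := hK ⟨m + 1, rfl⟩
  simp only at h1
  push_cast at h1
  rw [one_div, inv_pow, ← div_eq_mul_inv, div_le_iff₀ (by positivity), pow_succ] at h1
  have h2 := le_abs_self K
  have h3 : (0 : ℝ) < 2 ^ m := by positivity
  nlinarith

lemma hx_poly2 (p t : ℕ) : ∃ K : ℝ, 0 < K ∧ ∀ m : ℕ, t ≤ m →
    ((m : ℝ) + 1) ^ p * 2 ^ m ≤ K * 2 ^ ((3 * m - t) / 2) := by
  obtain ⟨K, hK, h⟩ := hx_poly (2 * p)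
  refine ⟨Real.sqrt (K * 2 ^ (t + 1)), by positivity, fun m hm => ?_⟩
  have e : Real.sqrt (K * 2 ^ (t + 1)) * 2 ^ ((3 * m - t) / 2)
      = Real.sqrt (K * 2 ^ (t + 1) * (2 ^ ((3 * m - t) / 2)) ^ 2) := by
    rw [Real.sqrt_mul (by positivity) ((2 ^ ((3 * m - t) / 2)) ^ 2),
      Real.sqrt_sq (by positivity : (0 : ℝ) ≤ 2 ^ ((3 * m - t) / 2))]
  rw [e]
  apply Real.le_sqrt_of_sq_le
  have h1 : (2 : ℝ) ^ (3 * m) ≤ 2 ^ (t + 1 + (3 * m - t) / 2 * 2) :=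
    pow_le_pow_right₀ (by norm_num) (by omega)
  calc (((m : ℝ) + 1) ^ p * 2 ^ m) ^ 2 = ((m : ℝ) + 1) ^ (2 * p) * 2 ^ (2 * m) := by
        rw [mul_pow, ← pow_mul, ← pow_mul, mul_comm p, mul_comm m]
    _ ≤ K * 2 ^ m * 2 ^ (2 * m) := by gcongr; exact h m
    _ = K * 2 ^ (3 * m) := by rw [mul_assoc, ← pow_add]; congr 2; ring
    _ ≤ K * 2 ^ (t + 1 + (3 * m - t) / 2 * 2) := by gcongr
    _ = K * 2 ^ (t + 1) * (2 ^ ((3 * m - t) / 2)) ^ 2 := by rw [pow_add, pow_mul, mul_assoc]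

/-- Theorem 5.5: the squared `L_2`-discrepancy of an order `3` digital `(t_3,m,s)`-net
over `F_2` is of order `m^{s-1}/2^{2m}`. -/
theorem stmt_13 (s : ℕ) (hs : 0 < s) (t₃ : ℕ) :
    ∃ D : ℝ, 0 < D ∧
      ∀ m : ℕ, 0 < m → ∀ n : ℕ, ∀ C : Fin s → Matrix (Fin n) (Fin m) (ZMod 2),
        (3 * m : ℤ) - t₃ + 1 ≤ minWeight 2 3 C →
        sqL2 (2 ^ m) (netPoint 2 C) ≤ D * (m : ℝ) ^ (s - 1) / 2 ^ (2 * m) := by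
  obtain ⟨s, rfl⟩ : ∃ s', s = s' + 1 := ⟨s - 1, by omega⟩
  generalize t₃ = t
  obtain ⟨K, hK, hKm⟩ := hx_poly2 (2 * (s + 1)) t
  set D1 : ℝ := 2 * ((2 ^ (s + 1)) ^ 2 * (2 ^ (s + 1) * 2 ^ t * (2 ^ s * (2 * 2 ^ t)))) with hD1
  set D2 : ℝ := 2 * ((2 ^ (s + 1)) ^ 2 * (2 * 2 ^ (s + 1) * (2 ^ (s + 1) * 2 ^ t) * K)) with hD2
  set D3 : ℝ := 2 * (((s + 1 : ℕ) : ℝ) * (2 ^ t + 1)) ^ 2 with hD3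
  have p1 : 0 < D1 := by positivity
  have p2 : 0 < D2 := by positivity
  have p3 : 0 ≤ D3 := by positivity
  refine ⟨D1 + D2 + D3 + 2 ^ (2 * t), by positivity, ?_⟩
  intro m hm n C H
  have hm1 : (1 : ℝ) ≤ m := by exact_mod_cast hm
  have hms : (1 : ℝ) ≤ (m : ℝ) ^ s := one_le_pow₀ hm1
  rw [Nat.add_sub_cancel, le_div_iff₀ (by positivity)]
  rcases lt_or_ge m t with hmt | htm
  · have h1 := hx_sq_triv (2 ^ m) (netPoint 2 C)
    have h2 : (2 : ℝ) ^ (2 * m) ≤ 2 ^ (2 * t) := pow_le_pow_right₀ (by norm_num) (by omega)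
    calc sqL2 (2 ^ m) (netPoint 2 C) * 2 ^ (2 * m) ≤ 1 * 2 ^ (2 * t) := by gcongr
      _ ≤ (D1 + D2 + D3 + 2 ^ (2 * t)) * 1 := by linarith
      _ ≤ _ := by gcongr
  · have hn := hx_n hs C H
    obtain ⟨d, rfl⟩ : ∃ d, n = m + d := ⟨n - m, by omega⟩
    have h1 := hx_sq_bound C htm H
    have h2 := hx_Dd_bound (hxA C) htm (hx_H1 C H) (hx_H2 C H)
    have h3 : ((m : ℝ) + 1) ^ s ≤ 2 ^ s * m ^ s := by
      rw [← mul_pow]; gcongr; linarith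
    have h4 := hKm m htm
    set R := (3 * m - t) / 2 with hR
    have eP : (2 : ℝ) ^ (2 * m) = 2 ^ m * 2 ^ m := by rw [← pow_add]; congr 1; ring
    have e5 : (1 / 2 : ℝ) ^ (m - t) * 2 ^ m = 2 ^ t := by
      obtain ⟨r, rfl⟩ := Nat.exists_eq_add_of_le htm
      rw [Nat.add_sub_cancel_left, pow_add, mul_left_comm, ← mul_pow]; norm_num
    have e6 : (1 / 2 : ℝ) ^ m * 2 ^ m = 1 := by rw [← mul_pow]; norm_num
    have e7 : (1 / 2 : ℝ) ^ R * 2 ^ R = 1 := by rw [← mul_pow]; norm_num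
    have b1 : 2 * ((2 ^ (s + 1)) ^ 2 *
        (2 ^ (s + 1) * 2 ^ t * (1 / 2) ^ m * (((m : ℝ) + 1) ^ s * (2 * (1 / 2) ^ (m - t)))))
        * (2 ^ m * 2 ^ m) ≤ D1 * m ^ s := by
      calc _ = 2 * ((2 ^ (s + 1)) ^ 2 *
        (2 ^ (s + 1) * 2 ^ t * (((1 / 2) ^ m * 2 ^ m) * (((m : ℝ) + 1) ^ s
          * (2 * ((1 / 2) ^ (m - t) * 2 ^ m)))))) := by ring
        _ = 2 * ((2 ^ (s + 1)) ^ 2 *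
        (2 ^ (s + 1) * 2 ^ t * (((m : ℝ) + 1) ^ s * (2 * 2 ^ t)))) := by rw [e5, e6, one_mul]
        _ ≤ 2 * ((2 ^ (s + 1)) ^ 2 *
        (2 ^ (s + 1) * 2 ^ t * ((2 ^ s * m ^ s) * (2 * 2 ^ t)))) := by gcongr
        _ = D1 * m ^ s := by rw [hD1]; ring
    have b2' : (((m : ℝ) + 1) ^ (s + 1) * (1 / 2) ^ R) * ((1 / 2) ^ m * ((m : ℝ) + 1) ^ (s + 1))
        * (2 ^ m * 2 ^ m) ≤ K := by
      calc _ = (((m : ℝ) + 1) ^ (2 * (s + 1)) * 2 ^ m) * ((1 / 2) ^ R * ((1 / 2) ^ m * 2 ^ m)) := by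
            ring
        _ ≤ (K * 2 ^ R) * ((1 / 2) ^ R * ((1 / 2) ^ m * 2 ^ m)) := by gcongr
        _ = K * ((1 / 2) ^ R * 2 ^ R) * ((1 / 2) ^ m * 2 ^ m) := by ring
        _ = K := by rw [e6, e7]; ring
    have b2 : 2 * ((2 ^ (s + 1)) ^ 2 *
        (2 * ((2 ^ (s + 1) * ((m : ℝ) + 1) ^ (s + 1)) * (1 / 2) ^ R)
          * (2 ^ (s + 1) * 2 ^ t * (1 / 2) ^ m * ((m : ℝ) + 1) ^ (s + 1))))
        * (2 ^ m * 2 ^ m) ≤ D2 := by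
      calc _ = 2 * ((2 ^ (s + 1)) ^ 2 * (2 * 2 ^ (s + 1) * (2 ^ (s + 1) * 2 ^ t) *
            ((((m : ℝ) + 1) ^ (s + 1) * (1 / 2) ^ R) * ((1 / 2) ^ m * ((m : ℝ) + 1) ^ (s + 1))
        * (2 ^ m * 2 ^ m)))) := by ring
        _ ≤ D2 := by rw [hD2]; gcongr
    have b3 : 2 * (((s + 1 : ℕ) : ℝ) * (2 ^ t + 1) / 2 ^ m) ^ 2 * (2 ^ m * 2 ^ m) = D3 := by
      rw [hD3]; field_simp
    rw [eP]
    have hP : (0 : ℝ) < 2 ^ m * 2 ^ m := by positivity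
    have h5 := mul_le_mul_of_nonneg_right (h1.trans (add_le_add_left
      (mul_le_mul_of_nonneg_left h2 zero_le_two) _)) hP.le
    have hT : (0 : ℝ) < 2 ^ (2 * t) := by positivity
    have h6 : D2 ≤ D2 * (m : ℝ) ^ s := le_mul_of_one_le_right p2.le hms
    have h7 : D3 ≤ D3 * (m : ℝ) ^ s := le_mul_of_one_le_right p3 hms
    have h8 : 0 ≤ 2 ^ (2 * t) * (m : ℝ) ^ s := by positivity
    rw [add_mul, b3, mul_add (((2 : ℝ) ^ (s + 1)) ^ 2), mul_add (2 : ℝ), add_mul] at h5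
    rw [add_mul, add_mul, add_mul]
    linarith
end

section
/- Let b be a prime and let alpha, beta be integers with 1 < alpha < beta. Then for every s in N and every k in N_0^s, mu_alpha(k) >= ((alpha-1)/(beta-1)) mu_beta(k) + ((beta-alpha)/(beta-1)) mu_1(k). -/
open MeasureTheory Finset Matrix

theorem take_sum_eq (L : List ℕ) (n : ℕ) :
    ((L.take n).map (· + 1)).sum = ∑ i ∈ Finset.range n, (L.map (· + 1)).getD i 0 := by
  induction n generalizing L with
  | zero => simp
  | succ n ih =>
    cases L with
    | nil => simp
    | cons a t =>
      rw [Finset.sum_range_succ', List.take_succ_cons, List.map_cons, List.sum_cons, ih]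
      simp [add_comm]

theorem getD_anti (L : List ℕ) (hL : L.Pairwise (· ≥ ·)) :
    Antitone fun i => (L.map (· + 1)).getD i 0 := by
  intro i j hij
  simp only [List.getD_eq_getElem?_getD]
  by_cases hj : j < L.length
  · have hi : i < L.length := by omega
    rcases Nat.eq_or_lt_of_le hij with h | h
    · subst h; exact le_rfl
    · have := List.pairwise_iff_getElem.1 hL i j hi hj h
      simp [hi, hj]
      exact this
  · simp [List.getElem?_eq_none (not_lt.1 hj)]

theorem conc_aux (f : ℕ → ℕ) (hf : Antitone f) (a d : ℕ) :
    (a + 1) * (∑ i ∈ Finset.range (a + 2 + d), f i) + d * (∑ i ∈ Finset.range 1, f i)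
      ≤ (a + 1 + d) * (∑ i ∈ Finset.range (a + 2), f i) := by
  have h1 : (a + 1) * f (a + 1) ≤ ∑ i ∈ Finset.range (a + 1), f (i + 1) := by
    have := Finset.card_nsmul_le_sum (Finset.range (a + 1)) (fun i => f (i + 1)) (f (a + 1))
      (fun i hi => hf (by have := Finset.mem_range.1 hi; omega))
    simpa using this
  have h2 : ∑ i ∈ Finset.range d, f (a + 2 + i) ≤ d * f (a + 1) := by
    have := Finset.sum_le_card_nsmul (Finset.range d) (fun i => f (a + 2 + i)) (f (a + 1))
      (fun i _ => hf (by omega))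
    simpa using this
  rw [Finset.sum_range_add, Finset.sum_range_succ' f (a + 1)]
  simp only [Finset.sum_range_one]
  have h3 := Nat.mul_le_mul_left d h1
  have h4 := Nat.mul_le_mul_left (a + 1) h2
  nlinarith

theorem dick_aux (b a d k : ℕ) :
    (a + 1) * dickWeight b (a + 2 + d) k + d * dickWeight b 1 k
      ≤ (a + 1 + d) * dickWeight b (a + 2) k := by
  unfold dickWeight
  simp only [take_sum_eq]
  refine conc_aux _ (getD_anti _ ?_) a d
  unfold nzPos
  rw [List.pairwise_reverse]
  exact Finset.pairwise_sort _ _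

/-- Lemma 6.3 (interpolation of weight functions): for `1 < α < β`,
`μ_α(k) ≥ ((α-1)/(β-1)) μ_β(k) + ((β-α)/(β-1)) μ_1(k)`. -/
theorem stmt_16 (b : ℕ) (hb : b.Prime) (α β : ℕ) (hα : 1 < α) (hαβ : α < β)
    (s : ℕ) (k : Fin s → ℕ) :
    ((α : ℝ) - 1) / ((β : ℝ) - 1) * (dickWeightV b β k : ℝ)
      + ((β : ℝ) - (α : ℝ)) / ((β : ℝ) - 1) * (dickWeightV b 1 k : ℝ)
      ≤ (dickWeightV b α k : ℝ) := by
  obtain ⟨a, rfl⟩ : ∃ a, α = a + 2 := ⟨α - 2, by omega⟩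
  obtain ⟨d, rfl⟩ : ∃ d, β = a + 2 + d := ⟨β - (a + 2), by omega⟩
  have h : (a + 1) * dickWeightV b (a + 2 + d) k + d * dickWeightV b 1 k
      ≤ (a + 1 + d) * dickWeightV b (a + 2) k := by
    unfold dickWeightV
    rw [Finset.mul_sum, Finset.mul_sum, Finset.mul_sum, ← Finset.sum_add_distrib]
    exact Finset.sum_le_sum fun j _ => dick_aux b a d (k j)
  have h' : ((a : ℝ) + 1) * (dickWeightV b (a + 2 + d) k : ℝ) + d * (dickWeightV b 1 k : ℝ)
      ≤ (a + 1 + d) * (dickWeightV b (a + 2) k : ℝ) := by exact_mod_cast h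
  have hp : (0 : ℝ) < (a : ℝ) + 1 + d := by positivity
  have e1 : ((a + 2 + d : ℕ) : ℝ) - 1 = (a : ℝ) + 1 + d := by push_cast; ring
  have e2 : ((a + 2 : ℕ) : ℝ) - 1 = (a : ℝ) + 1 := by push_cast; ring
  have e3 : ((a + 2 + d : ℕ) : ℝ) - ((a + 2 : ℕ) : ℝ) = d := by push_cast; ring
  rw [e1, e2, e3, div_mul_eq_mul_div, div_mul_eq_mul_div, ← add_div, div_le_iff₀ hp]
  linarith
end
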